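/- arXiv:2103.16691 — 4 statements merged into one kernel-verified Lean document; each statement's English description precedes it below -/
import Mathlib

section
/- The element γ = (xy)² − y²x² is central in the binary cubic generic Clifford algebra A; moreover the two expressions (xy)² − y²x² and (yx)² − x²y² define the same element of A. -/
noncomputable section

open FreeAlgebra

variable (k : Type*) [Field k]

/-- Relations of the binary cubic generic Clifford algebra. -/
inductive GCRel : FreeAlgebra k (Fin 2) → FreeAlgebra k (Fin 2) → Prop
  | rel1 : GCRel ((ι k 0) ^ 3 * ι k 1) (ι k 1 * (ι k 0) ^ 3)
  | rel2 : GCRel (ι k 0 * (ι k 1) ^ 3) ((ι k 1) ^ 3 * ι k 0)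
  | rel3 : GCRel ((ι k 0) ^ 2 * (ι k 1) ^ 2 + (ι k 0 * ι k 1) ^ 2)
      ((ι k 1) ^ 2 * (ι k 0) ^ 2 + (ι k 1 * ι k 0) ^ 2)

/-- The binary cubic generic Clifford algebra. -/
abbrev GCA := RingQuot (GCRel k)

/-- The generator x. -/
def gx : GCA k := RingQuot.mkAlgHom k (GCRel k) (ι k 0)

/-- The generator y. -/
def gy : GCA k := RingQuot.mkAlgHom k (GCRel k) (ι k 1)

/-- α = x²y + xyx + yx². -/
def gα : GCA k := gx k ^ 2 * gy k + gx k * gy k * gx k + gy k * gx k ^ 2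

/-- β = xy² + yxy + y²x. -/
def gβ : GCA k := gx k * gy k ^ 2 + gy k * gx k * gy k + gy k ^ 2 * gx k

/-- γ = (xy)² − y²x². -/
def gγ : GCA k := (gx k * gy k) ^ 2 - gy k ^ 2 * gx k ^ 2

/-- δ = yx − ω·xy. -/
def gδ (ω : k) : GCA k := gy k * gx k - algebraMap k (GCA k) ω * (gx k * gy k)

end

/-!
Write `γ = (xy)² - y²x²` and `γ' = (yx)² - x²y²`. Since `x(yx)² = (xy)²x` holds for free and
`x · x²y² = x³y² = y²x³ = y²x² · x`, the generator `x` intertwines `γ'` with `γ`: `xγ' = γx`;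
exchanging the roles of `x` and `y`, also `yγ = γ'y`. The third defining relation says exactly that
`γ = γ'`, so `γ` commutes with both generators.
-/

section Monoid

variable {M : Type*} [Monoid M]

theorem semiconjBy_mul_pow_swap (x y : M) (n : ℕ) : SemiconjBy x ((y * x) ^ n) ((x * y) ^ n) :=
  (mul_pow_mul x y n).symm

theorem semiconjBy_pow_mul_swap {x z : M} {n : ℕ} (h : Commute (x ^ (n + 1)) z) :
    SemiconjBy x (x ^ n * z) (z * x ^ n) :=
  calc
    x * (x ^ n * z) = x ^ (n + 1) * z := by rw [pow_succ', mul_assoc]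
    _ = z * x ^ (n + 1) := h.eq
    _ = z * x ^ n * x := by rw [pow_succ, mul_assoc]

end Monoid

section Ring

variable {A : Type*} [Ring A] {x y : A}

theorem semiconjBy_mul_sq_sub_sq_mul_sq (h : Commute (x ^ 3) (y ^ 2)) :
    SemiconjBy x ((y * x) ^ 2 - x ^ 2 * y ^ 2) ((x * y) ^ 2 - y ^ 2 * x ^ 2) :=
  (semiconjBy_mul_pow_swap x y 2).sub_right (semiconjBy_pow_mul_swap h)

theorem mul_sq_sub_sq_mul_sq_eq_swap
    (h : x ^ 2 * y ^ 2 + (x * y) ^ 2 = y ^ 2 * x ^ 2 + (y * x) ^ 2) :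
    (x * y) ^ 2 - y ^ 2 * x ^ 2 = (y * x) ^ 2 - x ^ 2 * y ^ 2 := by
  rw [sub_eq_sub_iff_add_eq_add, add_comm, h, add_comm]

end Ring

theorem mem_center_of_adjoin_eq_top {R A : Type*} [CommSemiring R] [Semiring A] [Algebra R A]
    {s : Set A} (hs : Algebra.adjoin R s = ⊤) {z : A} (hz : ∀ a ∈ s, Commute z a) :
    z ∈ Set.center A :=
  Semigroup.mem_center_iff.2 fun _ ↦
    (Algebra.commute_of_mem_adjoin_of_forall_mem_commute (hs ▸ Algebra.mem_top) hz).symm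

theorem stmt0_general {R A : Type*} [CommSemiring R] [Ring A] [Algebra R A] {x y : A}
    (hadj : Algebra.adjoin R {x, y} = ⊤)
    (hx : Commute (x ^ 3) (y ^ 2)) (hy : Commute (x ^ 2) (y ^ 3))
    (hxy : x ^ 2 * y ^ 2 + (x * y) ^ 2 = y ^ 2 * x ^ 2 + (y * x) ^ 2) :
    (x * y) ^ 2 - y ^ 2 * x ^ 2 ∈ Set.center A ∧
      (x * y) ^ 2 - y ^ 2 * x ^ 2 = (y * x) ^ 2 - x ^ 2 * y ^ 2 := by
  have hγ := mul_sq_sub_sq_mul_sq_eq_swap hxy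
  have hγx : SemiconjBy x _ _ := semiconjBy_mul_sq_sub_sq_mul_sq hx
  have hγy : SemiconjBy y _ _ := semiconjBy_mul_sq_sub_sq_mul_sq hy.symm
  rw [← hγ] at hγx hγy
  refine ⟨mem_center_of_adjoin_eq_top hadj ?_, hγ⟩
  rintro a (rfl | rfl)
  exacts [hγx.symm, hγy.symm]

section GCA

variable (k : Type*) [Field k]

theorem commute_gx_pow_three_gy : Commute (gx k ^ 3) (gy k) := by
  simpa only [commute_iff_eq, gx, gy, map_mul, map_pow] using
    RingQuot.mkAlgHom_rel k (GCRel.rel1 (k := k))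

theorem commute_gx_gy_pow_three : Commute (gx k) (gy k ^ 3) := by
  simpa only [commute_iff_eq, gx, gy, map_mul, map_pow] using
    RingQuot.mkAlgHom_rel k (GCRel.rel2 (k := k))

theorem gx_sq_mul_gy_sq_add_mul_sq :
    gx k ^ 2 * gy k ^ 2 + (gx k * gy k) ^ 2 = gy k ^ 2 * gx k ^ 2 + (gy k * gx k) ^ 2 := by
  simpa only [gx, gy, map_add, map_mul, map_pow] using
    RingQuot.mkAlgHom_rel k (GCRel.rel3 (k := k))

theorem adjoin_gx_gy : Algebra.adjoin k {gx k, gy k} = ⊤ := by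
  let π := RingQuot.mkAlgHom k (GCRel k)
  have hgen : ({gx k, gy k} : Set (GCA k)) = π '' Set.range (FreeAlgebra.ι k) := by
    rw [← Set.range_comp]
    simp [Set.ext_iff, Fin.exists_fin_two, gx, gy, π, eq_comm]
  rw [hgen, Algebra.adjoin_image, FreeAlgebra.adjoin_range_ι, Algebra.map_top]
  exact (AlgHom.range_eq_top π).2 (RingQuot.mkAlgHom_surjective k (GCRel k))

end GCA

theorem stmt0 (k : Type*) [Field k] (h2 : (2 : k) ≠ 0) (h3 : (3 : k) ≠ 0)
    (ω : k) (hω : IsPrimitiveRoot ω 3) :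
    gγ k ∈ Set.center (GCA k) ∧
      (gx k * gy k) ^ 2 - gy k ^ 2 * gx k ^ 2 =
        (gy k * gx k) ^ 2 - gx k ^ 2 * gy k ^ 2 :=
  stmt0_general (adjoin_gx_gy k) ((commute_gx_pow_three_gy k).pow_right 2)
    ((commute_gx_gy_pow_three k).pow_left 2) (gx_sq_mul_gy_sq_add_mul_sq k)
end

section
/- The five elements x³, y³, α, β, γ of A are algebraically independent over k; consequently the k-subalgebra S of A generated by x³, y³, α, β, γ is isomorphic as a k-algebra to a polynomial ring in five variables (in particular γ is not integral over the subalgebra generated by x³, y³, α, β). -/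
/- Over an algebraically closed field `K`, the generic Clifford algebra has many representations on
`K³` in which `x³, y³, α, β, γ` act by scalars: diagonalise `x` as `s · diag(1, w, w²)` with
`w² + w + 1 = 0`; the equations for the entries of `y` can then be solved explicitly, so that the
five scalars may be prescribed arbitrarily off two hypersurfaces. Prescribing five scalars that are
algebraically independent over `k` turns a polynomial relation among `x³, y³, α, β, γ` into one
among these scalars, which is therefore trivial. -/

section PolynomialSubalgebra

open MvPolynomial

variable {R A ι : Type*} [CommRing R] [Ring A] [Algebra R A]

open scoped IsMulCommutative in
/-- Evaluation of polynomials at a family of pairwise commuting elements of a possibly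
noncommutative algebra. -/
noncomputable def commutingAeval (a : ι → A) (ha : ∀ i j, Commute (a i) (a j)) :
    MvPolynomial ι R →ₐ[R] A :=
  haveI := Algebra.isMulCommutative_adjoin R (s := Set.range a)
    (by rintro _ ⟨i, rfl⟩ _ ⟨j, rfl⟩; exact ha i j)
  (Algebra.adjoin R (Set.range a)).val.comp
    (aeval fun i => ⟨a i, Algebra.subset_adjoin ⟨i, rfl⟩⟩)

@[simp]
lemma commutingAeval_X (a : ι → A) (ha : ∀ i j, Commute (a i) (a j)) (i : ι) :
    commutingAeval (R := R) a ha (X i) = a i := by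
  simp [commutingAeval]

lemma range_eq_adjoin_range_X (f : MvPolynomial ι R →ₐ[R] A) :
    f.range = Algebra.adjoin R (Set.range fun i => f (X i)) := by
  rw [← Algebra.map_top, ← adjoin_range_X, AlgHom.map_adjoin, ← Set.range_comp]
  rfl

lemma injective_of_comp_X_algebraicIndependent {B K : Type*} [Ring B] [Algebra R B] [CommRing K]
    [Algebra R K] (f : MvPolynomial ι R →ₐ[R] A) (ρ : A →ₐ[R] B) {ψ : K →ₐ[R] B}
    (hψ : Function.Injective ψ) {v : ι → K} (hv : AlgebraicIndependent R v)
    (h : ∀ i, ρ (f (X i)) = ψ (v i)) : Function.Injective f := by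
  have hcomp : ρ.comp f = ψ.comp (aeval v) := by
    ext i
    simp [h]
  refine Function.Injective.of_comp (f := ρ) ?_
  rw [← AlgHom.coe_comp, hcomp, AlgHom.coe_comp]
  exact hψ.comp hv

lemma linearIndependent_map_prod_X_pow [Fintype ι] {f : MvPolynomial ι R →ₐ[R] A}
    (hf : Function.Injective f) :
    LinearIndependent R fun e : ι → ℕ => f (∏ i, X i ^ e i) := by
  have hmon := (basisMonomials ι R).linearIndependent.map' f.toLinearMap
    (LinearMap.ker_eq_bot.2 hf)
  have heq (e : ι → ℕ) :
      f (∏ i, X i ^ e i) = f (basisMonomials ι R (Finsupp.equivFunOnFinite.symm e)) := by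
    simp [monomial_eq, Finsupp.prod_fintype]
  simp only [heq]
  exact hmon.comp _ Finsupp.equivFunOnFinite.symm.injective

lemma pow_add_sum_ne_zero_of_transcendental {B C : Type*} [CommRing B] [CommRing C] [Algebra B C]
    [Nontrivial C] {t : C} (ht : Transcendental B t) {n : ℕ} (c : Fin n → B) :
    t ^ n + ∑ j, algebraMap B C (c j) * t ^ (j : ℕ) ≠ 0 := by
  have := (algebraMap B C).domain_nontrivial
  have hmonic := Polynomial.monic_X_pow_add (Polynomial.degree_sum_fin_lt c)
  intro h
  exact ht ⟨_, hmonic.ne_zero, by simpa using h⟩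

lemma pow_add_sum_ne_zero_of_mem_adjoin_compl [Nontrivial R] {f : MvPolynomial ι R →ₐ[R] A}
    (hf : Function.Injective f) (i : ι) {n : ℕ} {c : Fin n → A}
    (hc : ∀ j, c j ∈ Algebra.adjoin R ((fun l => f (X l)) '' {i}ᶜ)) :
    f (X i) ^ n + ∑ j, c j * f (X i) ^ (j : ℕ) ≠ 0 := by
  have hc' : ∀ j, ∃ C : Algebra.adjoin R ((X : ι → MvPolynomial ι R) '' {i}ᶜ), f C = c j := by
    intro j
    have hj := hc j
    rw [← Set.image_image f X, ← AlgHom.map_adjoin] at hj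
    obtain ⟨C, hC, hCc⟩ := hj
    exact ⟨⟨C, hC⟩, hCc⟩
  choose C hC using hc'
  have htr := (algebraicIndependent_X ι R).transcendental_adjoin (s := {i}ᶜ) (i := i) (by simp)
  have hne := (map_ne_zero_iff f hf).2 (pow_add_sum_ne_zero_of_transcendental htr C)
  simpa [Subalgebra.algebraMap_def, hC] using hne

end PolynomialSubalgebra

section CubicInvariants

/-- The polarisation `x²y + xyx + yx²` of the cube, i.e. the coefficient of `t` in `(x + ty)³` for
a central `t`. -/
def cubePolar {B : Type*} [Semiring B] (x y : B) : B :=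
  x ^ 2 * y + x * y * x + y * x ^ 2

/-- The elements `x³, y³, α, β, γ` formed from arbitrary elements `x`, `y` of a ring. -/
def cubicInvariants {B : Type*} [Ring B] (x y : B) : Fin 5 → B :=
  ![x ^ 3, y ^ 3, cubePolar x y, cubePolar y x, (x * y) ^ 2 - y ^ 2 * x ^ 2]

variable {B : Type*} [Ring B] {x y : B}

lemma map_cubicInvariants {C F : Type*} [Ring C] [FunLike F B C] [RingHomClass F B C] (f : F)
    (x y : B) (i : Fin 5) : f (cubicInvariants x y i) = cubicInvariants (f x) (f y) i := by
  fin_cases i <;> simp [cubicInvariants, cubePolar]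

lemma commute_cubePolar_left (h : Commute (x ^ 3) y) : Commute (cubePolar x y) x := by
  have hcomm : x * cubePolar x y - cubePolar x y * x = x ^ 3 * y - y * x ^ 3 := by
    unfold cubePolar
    noncomm_ring
  exact (sub_eq_zero.1 (hcomm.trans (sub_eq_zero.2 h.eq))).symm

lemma commute_cubePolar_right_iff :
    Commute (cubePolar x y) y ↔
      x ^ 2 * y ^ 2 + (x * y) ^ 2 = y ^ 2 * x ^ 2 + (y * x) ^ 2 := by
  have hcomm : cubePolar x y * y - y * cubePolar x y =
      x ^ 2 * y ^ 2 + (x * y) ^ 2 - (y ^ 2 * x ^ 2 + (y * x) ^ 2) := by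
    unfold cubePolar
    noncomm_ring
  rw [commute_iff_eq, ← sub_eq_zero, hcomm, sub_eq_zero]

end CubicInvariants

namespace GCA

section Lift

variable {k B : Type*} [Field k] [Ring B] [Algebra k B]

/-- The universal property of the generic Clifford algebra: its relations say that `x³`, `y³` and
`α` commute with the generators. -/
noncomputable def lift (x y : B) (hx : Commute (x ^ 3) y) (hy : Commute (y ^ 3) x)
    (hα : Commute (cubePolar x y) y) : GCA k →ₐ[k] B :=
  RingQuot.liftAlgHom k ⟨FreeAlgebra.lift k ![x, y], by
    rintro _ _ (_ | _ | _)
    · simpa using hx.eq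
    · simpa using hy.eq.symm
    · simpa using commute_cubePolar_right_iff.1 hα⟩

variable {x y : B} (hx : Commute (x ^ 3) y) (hy : Commute (y ^ 3) x)
  (hα : Commute (cubePolar x y) y)

@[simp]
lemma lift_gx : lift (k := k) x y hx hy hα (gx k) = x := by
  simp [lift, gx]

@[simp]
lemma lift_gy : lift (k := k) x y hx hy hα (gy k) = y := by
  simp [lift, gy]

end Lift

section Center

variable (k : Type*) [Field k]

/-- The family `x³, y³, α, β, γ` of generators of the subalgebra `S`. -/
def invariants : Fin 5 → GCA k :=
  cubicInvariants (gx k) (gy k)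

lemma invariants_eq : invariants k = ![gx k ^ 3, gy k ^ 3, gα k, gβ k, gγ k] := by
  have hβ : cubePolar (gy k) (gx k) = gβ k := by
    unfold cubePolar gβ
    abel
  rw [invariants, cubicInvariants, hβ]
  rfl

lemma range_invariants :
    Set.range (invariants k) = {gx k ^ 3, gy k ^ 3, gα k, gβ k, gγ k} := by
  rw [invariants_eq]
  simp only [Matrix.range_cons, Matrix.range_empty, Set.union_empty, Set.singleton_union]

lemma invariants_image_compl :
    invariants k '' {4}ᶜ = {gx k ^ 3, gy k ^ 3, gα k, gβ k} := by
  have hcompl : ({4}ᶜ : Set (Fin 5)) = {0, 1, 2, 3} := by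
    ext i
    fin_cases i <;> simp
  simp [hcompl, Set.image_insert_eq, invariants_eq]

lemma commute_gx_pow_three_gy : Commute (gx k ^ 3) (gy k) := by
  simpa [commute_iff_eq, gx, gy] using RingQuot.mkAlgHom_rel k (GCRel.rel1 (k := k))

lemma commute_gy_pow_three_gx : Commute (gy k ^ 3) (gx k) := by
  simpa [commute_iff_eq, gx, gy] using (RingQuot.mkAlgHom_rel k (GCRel.rel2 (k := k))).symm

lemma gx_sq_mul_gy_sq_add :
    gx k ^ 2 * gy k ^ 2 + (gx k * gy k) ^ 2 = gy k ^ 2 * gx k ^ 2 + (gy k * gx k) ^ 2 := by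
  simpa [gx, gy] using RingQuot.mkAlgHom_rel k (GCRel.rel3 (k := k))

lemma adjoin_gx_gy : Algebra.adjoin k {gx k, gy k} = ⊤ := by
  have himage : {gx k, gy k} =
      RingQuot.mkAlgHom k (GCRel k) '' Set.range (FreeAlgebra.ι k : Fin 2 → _) := by
    rw [← Set.range_comp, ← Matrix.range_cons_cons_empty _ _ ![]]
    congr 1
    ext i
    fin_cases i <;> rfl
  rw [himage, ← AlgHom.map_adjoin, FreeAlgebra.adjoin_range_ι, Algebra.map_top,
    AlgHom.range_eq_top]
  exact RingQuot.mkAlgHom_surjective k (GCRel k)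

variable {k} in
lemma mem_center_of_commute {z : GCA k} (hx : Commute z (gx k)) (hy : Commute z (gy k)) :
    z ∈ Subalgebra.center k (GCA k) := by
  have hle : Algebra.adjoin k {gx k, gy k} ≤ Subalgebra.centralizer k {z} := by
    refine Algebra.adjoin_le ?_
    rintro _ (rfl | rfl) _ rfl
    exacts [hx, hy]
  rw [adjoin_gx_gy] at hle
  exact Subalgebra.mem_center_iff.2 fun b => (hle (Algebra.mem_top (x := b)) z rfl).symm

lemma invariants_mem_center {i : Fin 5} (hi : i ≠ 4) :
    invariants k i ∈ Subalgebra.center k (GCA k) := by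
  have hx := commute_gx_pow_three_gy k
  have hy := commute_gy_pow_three_gx k
  have hrel := gx_sq_mul_gy_sq_add k
  fin_cases i
  · exact mem_center_of_commute (Commute.pow_self _ 3) hx
  · exact mem_center_of_commute hy (Commute.pow_self _ 3)
  · exact mem_center_of_commute (commute_cubePolar_left hx) (commute_cubePolar_right_iff.2 hrel)
  · refine mem_center_of_commute (commute_cubePolar_right_iff.2 ?_) (commute_cubePolar_left hy)
    exact hrel.symm
  · exact absurd rfl hi

lemma commute_invariants (i j : Fin 5) : Commute (invariants k i) (invariants k j) := by
  by_cases hi : i = 4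
  · by_cases hj : j = 4
    · rw [hi, hj]
    · exact Subalgebra.mem_center_iff.1 (invariants_mem_center k hj) _
  · exact (Subalgebra.mem_center_iff.1 (invariants_mem_center k hi) _).symm

end Center

section Matrices

variable {K : Type*} [CommRing K]

/-- The matrix `s · diag(1, w, w²)`, the image of `x` in the representations on `K³`. -/
def xMatrix (w s : K) : Matrix (Fin 3) (Fin 3) K :=
  !![s, 0, 0; 0, w * s, 0; 0, 0, w ^ 2 * s]

/-- The image of `y` in the representations on `K³`. Conjugation by diagonal matrices has been used
to normalise two entries to `1`. -/
def yMatrix (w d p q r m : K) : Matrix (Fin 3) (Fin 3) K :=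
  !![d, 1, m; r, w * d, 1; q, p, w ^ 2 * d]

/-- The scalars by which `x³, y³, α, β, γ` act in the representation given by `xMatrix` and
`yMatrix`. -/
def scalarInvariants (w s d p q r m : K) : Fin 5 → K :=
  ![s ^ 3, d ^ 3 - d * (p + w * (q * m) + w ^ 2 * r) + q + m * (p * r), 3 * s ^ 2 * d,
    3 * s * d ^ 2 - s * (p + w * (q * m) + w ^ 2 * r), s ^ 2 * (p + w ^ 2 * (q * m) + w * r)]

lemma xMatrix_pow_three {w : K} (hw : w ^ 2 + w + 1 = 0) (s : K) :
    xMatrix w s ^ 3 = Matrix.scalar (Fin 3) (s ^ 3) := by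
  ext i j
  fin_cases i <;> fin_cases j <;>
    simp [xMatrix, pow_succ, Matrix.mul_apply, Fin.sum_univ_three] <;> grind

lemma yMatrix_pow_three {w : K} (hw : w ^ 2 + w + 1 = 0) (d : K) {p q r m : K}
    (hpqr : p + q * m + r = 0) :
    yMatrix w d p q r m ^ 3 = Matrix.scalar (Fin 3)
      (d ^ 3 - d * (p + w * (q * m) + w ^ 2 * r) + q + m * (p * r)) := by
  ext i j
  fin_cases i <;> fin_cases j <;>
    simp [yMatrix, pow_succ, Matrix.mul_apply, Fin.sum_univ_three] <;> grind

lemma cubePolar_xMatrix_yMatrix {w : K} (hw : w ^ 2 + w + 1 = 0) (s d p q r m : K) :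
    cubePolar (xMatrix w s) (yMatrix w d p q r m) = Matrix.scalar (Fin 3) (3 * s ^ 2 * d) := by
  ext i j
  fin_cases i <;> fin_cases j <;>
    simp [cubePolar, xMatrix, yMatrix, pow_succ] <;> grind

lemma cubePolar_yMatrix_xMatrix {w : K} (hw : w ^ 2 + w + 1 = 0) (s d : K) {p q r m : K}
    (hpqr : p + q * m + r = 0) :
    cubePolar (yMatrix w d p q r m) (xMatrix w s) = Matrix.scalar (Fin 3)
      (3 * s * d ^ 2 - s * (p + w * (q * m) + w ^ 2 * r)) := by
  ext i j
  fin_cases i <;> fin_cases j <;>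
    simp [cubePolar, xMatrix, yMatrix, pow_succ] <;> grind

lemma mul_sq_sub_sq_mul_sq_matrix {w : K} (hw : w ^ 2 + w + 1 = 0) (s d : K) {p q r m : K}
    (hpqr : p + q * m + r = 0) :
    (xMatrix w s * yMatrix w d p q r m) ^ 2 - yMatrix w d p q r m ^ 2 * xMatrix w s ^ 2 =
      Matrix.scalar (Fin 3) (s ^ 2 * (p + w ^ 2 * (q * m) + w * r)) := by
  ext i j
  fin_cases i <;> fin_cases j <;>
    simp [xMatrix, yMatrix, pow_succ] <;> grind

lemma cubicInvariants_matrix {w : K} (hw : w ^ 2 + w + 1 = 0) (s d : K) {p q r m : K}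
    (hpqr : p + q * m + r = 0) (i : Fin 5) :
    cubicInvariants (xMatrix w s) (yMatrix w d p q r m) i =
      Matrix.scalar (Fin 3) (scalarInvariants w s d p q r m i) := by
  fin_cases i
  exacts [xMatrix_pow_three hw s, yMatrix_pow_three hw d hpqr,
    cubePolar_xMatrix_yMatrix hw s d p q r m, cubePolar_yMatrix_xMatrix hw s d hpqr,
    mul_sq_sub_sq_mul_sq_matrix hw s d hpqr]

end Matrices

section Parameters

/-- The leading coefficient, up to a factor `27`, of the cubic covariant of the binary cubic form
`a X³ + c X²Y + e XY² + b Y³`, where `v` lists `a, b, c, e` and a last entry that does not occur.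
Off its zero locus and that of `a` the five scalars `v` can be realised by a representation. -/
def covariantCoeff {K : Type*} [CommRing K] (v : Fin 5 → K) : K :=
  27 * v 0 ^ 2 * v 1 + 2 * v 2 ^ 3 - 9 * v 0 * v 2 * v 3

variable {K : Type*} [Field K]

-- Inversion of the discrete Fourier transform on `ℤ/3`.
lemma exists_fourier_eq (h3 : (3 : K) ≠ 0) {w : K} (hw : w ^ 2 + w + 1 = 0) (P Q : K) :
    ∃ p n r : K, p + n + r = 0 ∧ p + w * n + w ^ 2 * r = P ∧ p + w ^ 2 * n + w * r = Q := by
  refine ⟨(P + Q) / 3, (w ^ 2 * P + w * Q) / 3, (w * P + w ^ 2 * Q) / 3, ?_, ?_, ?_⟩ <;>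
    field_simp <;> grind

variable [IsAlgClosed K]

lemma exists_sq_add_mul_add_eq_zero (b c : K) : ∃ z : K, z ^ 2 + b * z + c = 0 := by
  have hdeg : (Polynomial.X ^ 2 + Polynomial.C b * Polynomial.X + Polynomial.C c).degree = 2 := by
    compute_degree!
  obtain ⟨z, hz⟩ := IsAlgClosed.exists_root _ (hdeg.trans_ne two_ne_zero)
  exact ⟨z, by simpa [Polynomial.IsRoot] using hz⟩

lemma exists_mul_eq_and_add_mul_eq {t : K} (ht : t ≠ 0) (n c : K) :
    ∃ q m : K, q * m = n ∧ q + m * c = t := by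
  obtain ⟨q, hq⟩ := exists_sq_add_mul_add_eq_zero (-t) (n * c)
  by_cases hq0 : q = 0
  · have hnc : n * c = 0 := by simpa [hq0] using hq
    exact ⟨t, n / t, by field_simp, by rw [div_mul_eq_mul_div, hnc]; simp⟩
  · exact ⟨q, n / q, by field_simp, by field_simp; linear_combination hq⟩

lemma exists_scalarInvariants_eq (h3 : (3 : K) ≠ 0) {w : K} (hw : w ^ 2 + w + 1 = 0)
    {v : Fin 5 → K} (ha : v 0 ≠ 0) (ht : covariantCoeff v ≠ 0) :
    ∃ s d p q r m : K, p + q * m + r = 0 ∧ scalarInvariants w s d p q r m = v := by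
  obtain ⟨s, hs⟩ := IsAlgClosed.exists_pow_nat_eq (v 0) (n := 3) three_pos
  have hs0 : s ≠ 0 := by
    rintro rfl
    exact ha (by simp [← hs])
  obtain ⟨d, hd⟩ : ∃ d, 3 * s ^ 2 * d = v 2 := ⟨v 2 / (3 * s ^ 2), by field_simp⟩
  obtain ⟨P, hP⟩ : ∃ P, 3 * s * d ^ 2 - s * P = v 3 := ⟨3 * d ^ 2 - v 3 / s, by field_simp; ring⟩
  obtain ⟨Q, hQ⟩ : ∃ Q, s ^ 2 * Q = v 4 := ⟨v 4 / s ^ 2, by field_simp⟩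
  obtain ⟨p, n, r, hsum, rfl, rfl⟩ := exists_fourier_eq h3 hw P Q
  have ht' : v 1 - d ^ 3 + d * (p + w * n + w ^ 2 * r) ≠ 0 := by
    intro h
    refine ht ?_
    rw [covariantCoeff, ← hd, ← hP, ← hs]
    linear_combination 27 * s ^ 6 * h
  obtain ⟨q, m, rfl, hqm⟩ := exists_mul_eq_and_add_mul_eq ht' n (p * r)
  have hb : d ^ 3 - d * (p + w * (q * m) + w ^ 2 * r) + q + m * (p * r) = v 1 := by
    linear_combination hqm
  refine ⟨s, d, p, q, r, m, hsum, ?_⟩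
  ext i
  fin_cases i
  exacts [hs, hb, hd, hP, hQ]

end Parameters

section GenericRepresentation

open MvPolynomial

variable {k : Type*} [Field k]

lemma exists_rep_of_cubicInvariants_eq_scalar {K n : Type*} [CommRing K] [Algebra k K] [Fintype n]
    [DecidableEq n] {x y : Matrix n n K} {v : Fin 5 → K}
    (h : ∀ i, cubicInvariants x y i = Matrix.scalar n (v i)) :
    ∃ ρ : GCA k →ₐ[k] Matrix n n K, ∀ i, ρ (invariants k i) = Matrix.scalar n (v i) := by
  have hcentral (i : Fin 5) (M : Matrix n n K) : Commute (cubicInvariants x y i) M :=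
    h i ▸ Matrix.scalar_commute _ (Commute.all _) M
  have hx : Commute (x ^ 3) y := hcentral 0 y
  have hy : Commute (y ^ 3) x := hcentral 1 x
  have hα : Commute (cubePolar x y) y := hcentral 2 y
  refine ⟨lift x y hx hy hα, fun i => ?_⟩
  rw [invariants, map_cubicInvariants, lift_gx, lift_gy, h]

lemma covariantCoeff_ne_zero (h3 : (3 : k) ≠ 0) {K : Type*} [CommRing K] [Algebra k K]
    {v : Fin 5 → K} (hv : AlgebraicIndependent k v) :
    covariantCoeff v ≠ 0 := by
  let G : MvPolynomial (Fin 5) k := covariantCoeff X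
  have hG : G ≠ 0 := by
    intro h
    have h27 : (27 : k) = 0 := by simpa [G, covariantCoeff] using congrArg (eval ![1, 1, 0, 0, 0]) h
    exact pow_ne_zero 3 h3 (by linear_combination h27)
  intro h
  exact hG (hv.eq_zero_of_aeval_eq_zero G (by simpa [G, covariantCoeff] using h))

lemma exists_rep_of_algebraicIndependent (h3 : (3 : k) ≠ 0) {K : Type*} [Field K] [IsAlgClosed K]
    [Algebra k K] {v : Fin 5 → K} (hv : AlgebraicIndependent k v) :
    ∃ ρ : GCA k →ₐ[k] Matrix (Fin 3) (Fin 3) K,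
      ∀ i, ρ (invariants k i) = Matrix.scalar (Fin 3) (v i) := by
  have h3K : (3 : K) ≠ 0 := by
    simpa only [map_ofNat] using (map_ne_zero (algebraMap k K)).2 h3
  obtain ⟨w, hw⟩ := exists_sq_add_mul_add_eq_zero (1 : K) 1
  rw [one_mul] at hw
  obtain ⟨s, d, p, q, r, m, hpqr, rfl⟩ :=
    exists_scalarInvariants_eq h3K hw (hv.ne_zero 0) (covariantCoeff_ne_zero h3 hv)
  exact exists_rep_of_cubicInvariants_eq_scalar (cubicInvariants_matrix hw s d hpqr)

lemma injective_of_map_X_eq_invariants (h3 : (3 : k) ≠ 0) {f : MvPolynomial (Fin 5) k →ₐ[k] GCA k}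
    (hf : ∀ i, f (X i) = invariants k i) : Function.Injective f := by
  let F := FractionRing (MvPolynomial (Fin 5) k)
  let v : Fin 5 → AlgebraicClosure F := fun i =>
    algebraMap F _ (algebraMap (MvPolynomial (Fin 5) k) F (X i))
  have hv : AlgebraicIndependent k v :=
    ((algebraicIndependent_X (Fin 5) k).map' (f := IsScalarTower.toAlgHom k _ F)
      (IsFractionRing.injective _ F)).map' (f := IsScalarTower.toAlgHom k F (AlgebraicClosure F))
      (algebraMap F _).injective
  obtain ⟨ρ, hρ⟩ := exists_rep_of_algebraicIndependent h3 hv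
  refine injective_of_comp_X_algebraicIndependent f ρ (ψ := Matrix.scalarAlgHom (Fin 3) k)
    (fun _ _ => Matrix.scalar_inj.1) hv fun i => ?_
  rw [hf, hρ, Matrix.scalarAlgHom_apply]

end GenericRepresentation

end GCA

theorem stmt1_general (k : Type*) [Field k] (h3 : (3 : k) ≠ 0) :
    LinearIndependent k (fun e : Fin 5 → ℕ =>
        (gx k ^ 3) ^ e 0 * (gy k ^ 3) ^ e 1 * gα k ^ e 2 * gβ k ^ e 3 * gγ k ^ e 4) ∧
      Nonempty (MvPolynomial (Fin 5) k ≃ₐ[k]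
        Algebra.adjoin k ({gx k ^ 3, gy k ^ 3, gα k, gβ k, gγ k} : Set (GCA k))) ∧
      ¬ ∃ (n : ℕ) (c : Fin n → Algebra.adjoin k ({gx k ^ 3, gy k ^ 3, gα k, gβ k} : Set (GCA k))),
          0 < n ∧ gγ k ^ n + ∑ i : Fin n, (c i : GCA k) * gγ k ^ (i : ℕ) = 0 := by
  let f := commutingAeval (R := k) (GCA.invariants k) (GCA.commute_invariants k)
  have hX : ∀ i, f (MvPolynomial.X i) = GCA.invariants k i := commutingAeval_X _ _
  have hf : Function.Injective f := GCA.injective_of_map_X_eq_invariants h3 hX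
  refine ⟨?_, ?_, ?_⟩
  · simpa [Fin.prod_univ_five, hX, GCA.invariants_eq] using linearIndependent_map_prod_X_pow hf
  · have hrange : f.range = Algebra.adjoin k {gx k ^ 3, gy k ^ 3, gα k, gβ k, gγ k} := by
      simp only [range_eq_adjoin_range_X, hX, GCA.range_invariants]
    exact ⟨(AlgEquiv.ofInjective f hf).trans (Subalgebra.equivOfEq _ _ hrange)⟩
  · rintro ⟨n, c, -, hc⟩
    refine pow_add_sum_ne_zero_of_mem_adjoin_compl hf 4 (c := fun j => c j) (fun j => ?_) ?_
    · simp only [hX, GCA.invariants_image_compl]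
      exact (c j).2
    · simpa [hX, GCA.invariants_eq] using hc

theorem stmt1 (k : Type*) [Field k] (h2 : (2 : k) ≠ 0) (h3 : (3 : k) ≠ 0)
    (ω : k) (hω : IsPrimitiveRoot ω 3) :
    LinearIndependent k (fun e : Fin 5 → ℕ =>
        (gx k ^ 3) ^ e 0 * (gy k ^ 3) ^ e 1 * gα k ^ e 2 * gβ k ^ e 3 * gγ k ^ e 4) ∧
      Nonempty (MvPolynomial (Fin 5) k ≃ₐ[k]
        Algebra.adjoin k ({gx k ^ 3, gy k ^ 3, gα k, gβ k, gγ k} : Set (GCA k))) ∧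
      ¬ ∃ (n : ℕ) (c : Fin n → Algebra.adjoin k ({gx k ^ 3, gy k ^ 3, gα k, gβ k} : Set (GCA k))),
          0 < n ∧ gγ k ^ n + ∑ i : Fin n, (c i : GCA k) * gγ k ^ (i : ℕ) = 0 :=
  stmt1_general k h3
end

section
/- The binary cubic generic Clifford algebra A is a free module of rank 18 over the central subalgebra S = k[x³, y³, α, β, γ], with basis given by the 18 elements 1; x, y; x², xy, yx, y²; x²y, xy², y²x, yx²; x²y², xyxy, xyx², y²xy; x²y²x, xyxy²; x²y²xy. -/
/-- The 18 basis elements of `A` over `S = k[x³, y³, α, β, γ]`. -/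
noncomputable def gcaBasis (k : Type*) [Field k] : Fin 18 → GCA k :=
  ![1,
    gx k, gy k,
    gx k ^ 2, gx k * gy k, gy k * gx k, gy k ^ 2,
    gx k ^ 2 * gy k, gx k * gy k ^ 2, gy k ^ 2 * gx k, gy k * gx k ^ 2,
    gx k ^ 2 * gy k ^ 2, gx k * gy k * gx k * gy k, gx k * gy k * gx k ^ 2,
      gy k ^ 2 * gx k * gy k,
    gx k ^ 2 * gy k ^ 2 * gx k, gx k * gy k * gx k * gy k ^ 2,
    gx k ^ 2 * gy k ^ 2 * gx k * gy k]

/-!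
Let `x`, `y` generate an algebra over a commutative ring `C` in which `x³`, `y³`, `α`, `β`, `γ` are
scalars. The relations rewrite `x * w` and `y * w`, for `w` one of `1, x, x², yx, xyx, x²yx`, as
`C`-combinations of words `w' * y ^ j`, so the 18 words `w * y ^ j` with `j < 3` span the algebra.
Left multiplications commute with right multiplication by `y`, so the same table gives `6 × 6`
matrices over `C[t]/(t³ - y³)`. They satisfy the relations of `x` and `y`, and the word `w * y ^ j`
sends the basis vector `e_1` to `t ^ j • e_w`; hence the 18 words are linearly independent over
`C = S`. The 18 elements of the theorem span these words, and over a commutative ring a finite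
spanning family with as many members as a linearly independent one is itself linearly independent.
-/

namespace CubicClifford

section General

theorem submodule_eq_top_of_mul_mem {C A : Type*} [CommSemiring C] [Semiring A] [Algebra C A]
    {s : Set A} (hs : Algebra.adjoin C s = ⊤) {N : Submodule C A}
    (h1 : 1 ∈ N) (hmul : ∀ z ∈ s, ∀ n ∈ N, z * n ∈ N) : N = ⊤ := by
  suffices H : ∀ z ∈ Algebra.adjoin C s, ∀ n ∈ N, z * n ∈ N from
    eq_top_iff.2 fun z _ ↦ by simpa using H z (hs ▸ Algebra.mem_top) 1 h1
  intro z hz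
  induction hz using Algebra.adjoin_induction with
  | mem z hz => exact hmul z hz
  | algebraMap r =>
    intro n hn
    rw [← Algebra.smul_def]
    exact N.smul_mem r hn
  | add z w _ _ ihz ihw =>
    intro n hn
    rw [add_mul]
    exact add_mem (ihz n hn) (ihw n hn)
  | mul z w _ _ ihz ihw =>
    intro n hn
    rw [mul_assoc]
    exact ihz _ (ihw n hn)

theorem linearIndependent_of_span_eq_top {R M ι κ : Type*} [Semiring R] [OrzechProperty R]
    [AddCommMonoid M] [Module R M] [Finite ι] {v : ι → M} {w : κ → M}
    (hv : Submodule.span R (Set.range v) = ⊤) (hw : LinearIndependent R w) (e : ι ≃ κ) :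
    LinearIndependent R v := by
  rw [← Finsupp.range_linearCombination, LinearMap.range_eq_top] at hv
  have : Module.Finite R M := .of_surjective _ hv
  exact OrzechProperty.injective_of_surjective_of_injective _ _ (hw.comp e e.injective) hv

variable {C : Type*} [CommRing C]

open Polynomial in
theorem linearIndependent_root_pow (b : C) {n : ℕ} (hn : n ≠ 0) :
    LinearIndependent C fun j : Fin n ↦ AdjoinRoot.root (X ^ n - Polynomial.C b) ^ (j : ℕ) := by
  nontriviality C
  have hmonic : (X ^ n - Polynomial.C b).Monic := monic_X_pow_sub_C b hn
  have hdim : (AdjoinRoot.powerBasis' hmonic).dim = n := natDegree_X_pow_sub_C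
  have hli := ((AdjoinRoot.powerBasis' hmonic).basis.reindex (finCongr hdim)).linearIndependent
  simpa [Function.comp_def] using hli

open Polynomial in
theorem root_pow_eq_algebraMap (b : C) (n : ℕ) :
    AdjoinRoot.root (X ^ n - Polynomial.C b) ^ n = algebraMap C _ b := by
  have h := AdjoinRoot.eval₂_root (X ^ n - Polynomial.C b)
  rwa [eval₂_sub, eval₂_X_pow, eval₂_C, sub_eq_zero] at h

end General

section Commute

variable {A : Type*} [Ring A] {x y : A}

theorem commute_left_alpha (h : x ^ 3 * y = y * x ^ 3) :
    Commute x (x ^ 2 * y + x * y * x + y * x ^ 2) := by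
  rw [commute_iff_eq]
  linear_combination (norm := noncomm_ring) h

theorem commute_right_alpha (h : x ^ 2 * y ^ 2 + (x * y) ^ 2 = y ^ 2 * x ^ 2 + (y * x) ^ 2) :
    Commute y (x ^ 2 * y + x * y * x + y * x ^ 2) := by
  rw [commute_iff_eq]
  linear_combination (norm := noncomm_ring) -h

theorem commute_left_beta (h : x ^ 2 * y ^ 2 + (x * y) ^ 2 = y ^ 2 * x ^ 2 + (y * x) ^ 2) :
    Commute x (x * y ^ 2 + y * x * y + y ^ 2 * x) := by
  rw [commute_iff_eq]
  linear_combination (norm := noncomm_ring) h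

theorem commute_right_beta (h : x * y ^ 3 = y ^ 3 * x) :
    Commute y (x * y ^ 2 + y * x * y + y ^ 2 * x) := by
  rw [commute_iff_eq]
  linear_combination (norm := noncomm_ring) -h

theorem commute_left_gamma (h₁ : x ^ 3 * y = y * x ^ 3)
    (h₃ : x ^ 2 * y ^ 2 + (x * y) ^ 2 = y ^ 2 * x ^ 2 + (y * x) ^ 2) :
    Commute x ((x * y) ^ 2 - y ^ 2 * x ^ 2) := by
  have hx : x ^ 3 * y ^ 2 = y ^ 2 * x ^ 3 := (Commute.pow_right h₁ 2).eq
  rw [commute_iff_eq]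
  linear_combination (norm := noncomm_ring) x * h₃ - hx

theorem commute_right_gamma (h₂ : x * y ^ 3 = y ^ 3 * x)
    (h₃ : x ^ 2 * y ^ 2 + (x * y) ^ 2 = y ^ 2 * x ^ 2 + (y * x) ^ 2) :
    Commute y ((x * y) ^ 2 - y ^ 2 * x ^ 2) := by
  have hy : x ^ 2 * y ^ 3 = y ^ 3 * x ^ 2 := (Commute.pow_left h₂ 2).eq
  rw [commute_iff_eq]
  linear_combination (norm := noncomm_ring) hy - h₃ * y

end Commute

section Words

variable {M : Type*} [Monoid M]

/-- The words `1, x, x², yx, xyx, x²yx` that precede the power of `y` in a normal word. -/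
def leadWord (x y : M) : Fin 6 → M := ![1, x, x ^ 2, y * x, x * (y * x), x ^ 2 * (y * x)]

/-- The 18 normal words `w * y ^ j`, with `w` a `leadWord` and `j < 3`. The exponent is the first
component of the index, matching the order of the factors in `linearIndependent_smul`. -/
def normalWord (x y : M) (p : Fin 3 × Fin 6) : M := leadWord x y p.2 * y ^ (p.1 : ℕ)

variable {N F : Type*} [Monoid N] [FunLike F M N] [MonoidHomClass F M N] (f : F) (x y : M)

theorem map_leadWord (i : Fin 6) : f (leadWord x y i) = leadWord (f x) (f y) i := by
  fin_cases i <;> simp [leadWord]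

theorem map_normalWord (p : Fin 3 × Fin 6) :
    f (normalWord x y p) = normalWord (f x) (f y) p := by
  rw [normalWord, map_mul, map_pow, map_leadWord, normalWord]

end Words

section Pair

variable {C A : Type*} [CommRing C] [Ring A] [Algebra C A]

/-- A pair `x`, `y` in a `C`-algebra for which the elements `x³`, `y³`, `α`, `β`, `γ` of the generic
Clifford algebra are scalars from `C`. Over `C = S` the generators of `GCA k` form such a pair; the
general notion applies the same computations to `modelX` and `modelY`. -/
structure IsCliffordPair (a b α β γ : C) (x y : A) : Prop where
  x_pow_three : x ^ 3 = algebraMap C A a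
  y_pow_three : y ^ 3 = algebraMap C A b
  alpha : x ^ 2 * y + x * y * x + y * x ^ 2 = algebraMap C A α
  beta : x * y ^ 2 + y * x * y + y ^ 2 * x = algebraMap C A β
  gamma : (x * y) ^ 2 - y ^ 2 * x ^ 2 = algebraMap C A γ

variable {a b α β γ : C} {x y : A}

namespace IsCliffordPair

theorem of_algebraMap {R : Type*} [CommRing R] [Algebra C R] [Algebra R A]
    [IsScalarTower C R A]
    (h : IsCliffordPair (algebraMap C R a) (algebraMap C R b) (algebraMap C R α)
      (algebraMap C R β) (algebraMap C R γ) x y) : IsCliffordPair a b α β γ x y where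
  x_pow_three := by rw [h.x_pow_three, ← IsScalarTower.algebraMap_apply]
  y_pow_three := by rw [h.y_pow_three, ← IsScalarTower.algebraMap_apply]
  alpha := by rw [h.alpha, ← IsScalarTower.algebraMap_apply]
  beta := by rw [h.beta, ← IsScalarTower.algebraMap_apply]
  gamma := by rw [h.gamma, ← IsScalarTower.algebraMap_apply]

theorem x_pow_three_mul_y (h : IsCliffordPair a b α β γ x y) : x ^ 3 * y = y * x ^ 3 := by
  rw [h.x_pow_three, Algebra.commutes]

theorem x_mul_y_pow_three (h : IsCliffordPair a b α β γ x y) : x * y ^ 3 = y ^ 3 * x := by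
  rw [h.y_pow_three, Algebra.commutes]

theorem x_sq_mul_y_sq_add (h : IsCliffordPair a b α β γ x y) :
    x ^ 2 * y ^ 2 + (x * y) ^ 2 = y ^ 2 * x ^ 2 + (y * x) ^ 2 := by
  have hα := Algebra.commutes α y
  rw [← h.alpha] at hα
  linear_combination (norm := noncomm_ring) hα

theorem gamma_swap (h : IsCliffordPair a b α β γ x y) :
    (y * x) ^ 2 - x ^ 2 * y ^ 2 = algebraMap C A γ := by
  rw [← h.gamma, sub_eq_sub_iff_add_eq_add, add_comm, ← h.x_sq_mul_y_sq_add, add_comm]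

theorem yxx_eq (h : IsCliffordPair a b α β γ x y) :
    y * x ^ 2 = α • 1 - x ^ 2 * y - x * (y * x) := by
  rw [Algebra.smul_def]
  linear_combination (norm := noncomm_ring) h.alpha

theorem yyx_eq (h : IsCliffordPair a b α β γ x y) :
    y * (y * x) = β • 1 - x * y ^ 2 - y * x * y := by
  rw [Algebra.smul_def]
  linear_combination (norm := noncomm_ring) h.beta

theorem yxyx_eq (h : IsCliffordPair a b α β γ x y) :
    y * (x * (y * x)) = γ • 1 + x ^ 2 * y ^ 2 := by
  rw [Algebra.smul_def]
  linear_combination (norm := noncomm_ring) h.gamma_swap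

theorem yxxyx_eq (h : IsCliffordPair a b α β γ x y) :
    y * (x ^ 2 * (y * x)) =
      α • (y * x) - β • x ^ 2 + x ^ 2 * (y * x) * y - γ • x := by
  have hβ : β • x ^ 2 = x ^ 2 * algebraMap C A β := by rw [Algebra.smul_def, Algebra.commutes]
  have hγ : γ • x = x * algebraMap C A γ := by rw [Algebra.smul_def, Algebra.commutes]
  rw [Algebra.smul_def, hβ, hγ, ← h.alpha, ← h.beta, ← h.gamma_swap]
  noncomm_ring

theorem xyx_eq (h : IsCliffordPair a b α β γ x y) :
    x * (y * x) = α • 1 - x ^ 2 * y - y * x ^ 2 := by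
  rw [Algebra.smul_def]
  linear_combination (norm := noncomm_ring) h.alpha

theorem xxyx_eq (h : IsCliffordPair a b α β γ x y) :
    x ^ 2 * (y * x) = α • x - a • y - x * y * x ^ 2 := by
  have hα : α • x = x * algebraMap C A α := by rw [Algebra.smul_def, Algebra.commutes]
  rw [hα, Algebra.smul_def, ← h.alpha, ← h.x_pow_three]
  noncomm_ring

theorem yxy_eq (h : IsCliffordPair a b α β γ x y) :
    y * x * y = β • 1 - x * y ^ 2 - y ^ 2 * x := by
  rw [Algebra.smul_def]
  linear_combination (norm := noncomm_ring) h.beta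

theorem yxyy_eq (h : IsCliffordPair a b α β γ x y) :
    y * x * y ^ 2 = β • y - b • x - y ^ 2 * x * y := by
  have hb : b • x = x * algebraMap C A b := by rw [Algebra.smul_def, Algebra.commutes]
  rw [hb, Algebra.smul_def, ← h.beta, ← h.y_pow_three]
  noncomm_ring

theorem xxyxy_eq (h : IsCliffordPair a b α β γ x y) :
    x ^ 2 * (y * x) * y = β • x ^ 2 - a • y ^ 2 - x ^ 2 * y ^ 2 * x := by
  have hβ : β • x ^ 2 = x ^ 2 * algebraMap C A β := by rw [Algebra.smul_def, Algebra.commutes]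
  rw [hβ, Algebra.smul_def, ← h.beta, ← h.x_pow_three]
  noncomm_ring

theorem xxyxyy_eq (h : IsCliffordPair a b α β γ x y) :
    x ^ 2 * (y * x) * y ^ 2 = β • (x ^ 2 * y) - (a * b) • 1 - x ^ 2 * y ^ 2 * x * y := by
  have hβ : β • (x ^ 2 * y) = x ^ 2 * algebraMap C A β * y := by
    rw [Algebra.smul_def, ← mul_assoc, Algebra.commutes]
  rw [hβ, Algebra.smul_def, map_mul, ← h.beta, ← h.x_pow_three, ← h.y_pow_three]
  noncomm_ring

end IsCliffordPair

end Pair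

section Model

variable {R M : Type*} [CommRing R] [AddCommGroup M] [Module R M]

/-- Left multiplication by `x` on the span of the normal words, seen as a right module over the ring
generated by `y`: `e i` stands for `leadWord x y i` and the scalar `a` for `x³`. -/
noncomputable def modelX (e : Module.Basis (Fin 6) R M) (a : R) : Module.End R M :=
  e.constr R ![e 1, e 2, a • e 0, e 4, e 5, a • e 3]

/-- Left multiplication by `y` on the module of `modelX`, read off from `IsCliffordPair.yxx_eq` and
its companions. The scalar `t` stands for right multiplication by `y`. -/
noncomputable def modelY (e : Module.Basis (Fin 6) R M) (t α β γ : R) : Module.End R M :=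
  e.constr R ![t • e 0, e 3, α • e 0 - t • e 2 - e 4, β • e 0 - t ^ 2 • e 1 - t • e 3,
    γ • e 0 + t ^ 2 • e 2, α • e 3 - β • e 2 + t • e 5 - γ • e 1]

variable (e : Module.Basis (Fin 6) R M) (a t α β γ : R)

theorem modelX_basis (i : Fin 6) :
    modelX e a (e i) = ![e 1, e 2, a • e 0, e 4, e 5, a • e 3] i :=
  e.constr_basis R _ i

theorem modelY_basis (i : Fin 6) :
    modelY e t α β γ (e i) = ![t • e 0, e 3, α • e 0 - t • e 2 - e 4,
      β • e 0 - t ^ 2 • e 1 - t • e 3, γ • e 0 + t ^ 2 • e 2,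
      α • e 3 - β • e 2 + t • e 5 - γ • e 1] i :=
  e.constr_basis R _ i

theorem isCliffordPair_model :
    IsCliffordPair a (t ^ 3) α β γ (modelX e a) (modelY e t α β γ) := by
  constructor <;> refine e.ext fun i ↦ ?_ <;> fin_cases i <;>
    simp only [pow_succ, pow_zero, one_mul, Module.End.mul_apply, LinearMap.add_apply,
      LinearMap.sub_apply, Module.algebraMap_end_apply, map_add, map_sub, map_smul,
      modelX_basis, modelY_basis, Fin.zero_eta, Fin.mk_one, Fin.reduceFinMk, Matrix.cons_val] <;>
    module

theorem leadWord_model_apply (i : Fin 6) :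
    leadWord (modelX e a) (modelY e t α β γ) i (e 0) = e i := by
  fin_cases i <;> simp [leadWord, pow_succ, modelX_basis, modelY_basis]

theorem normalWord_model_apply (p : Fin 3 × Fin 6) :
    normalWord (modelX e a) (modelY e t α β γ) p (e 0) = t ^ (p.1 : ℕ) • e p.2 := by
  have hpow (j : ℕ) : (modelY e t α β γ ^ j) (e 0) = t ^ j • e 0 := by
    induction j with
    | zero => simp
    | succ j ih => simp [pow_succ', ih, modelY_basis, smul_smul, mul_comm]
  rw [normalWord, Module.End.mul_apply, hpow, map_smul, leadWord_model_apply]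

end Model

section Span

variable {C A : Type*} [CommRing C] [Ring A] [Algebra C A]
variable {a b α β γ : C} {x y : A}

variable (C x y) in
/-- The `C`-submodule spanned by the normal words in `x` and `y`. -/
def normalSpan : Submodule C A := Submodule.span C (Set.range (normalWord x y))

theorem leadWord_mul_pow_mem_normalSpan (i : Fin 6) {j : ℕ} (hj : j < 3) :
    leadWord x y i * y ^ j ∈ normalSpan C x y :=
  Submodule.subset_span ⟨(⟨j, hj⟩, i), rfl⟩

theorem leadWord_mem_normalSpan (i : Fin 6) : leadWord x y i ∈ normalSpan C x y := by
  simpa using leadWord_mul_pow_mem_normalSpan (C := C) (x := x) (y := y) i (j := 0) (by norm_num)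

theorem mul_y_mem_normalSpan (hy : y ^ 3 = algebraMap C A b) {n : A}
    (hn : n ∈ normalSpan C x y) : n * y ∈ normalSpan C x y := by
  suffices H : normalSpan C x y ≤ (normalSpan C x y).comap (LinearMap.mulRight C y) from H hn
  refine Submodule.span_le.2 ?_
  rintro _ ⟨⟨j, i⟩, rfl⟩
  change leadWord x y i * y ^ (j : ℕ) * y ∈ normalSpan C x y
  rw [mul_assoc, ← pow_succ]
  obtain hj | hj : (j : ℕ) + 1 < 3 ∨ (j : ℕ) + 1 = 3 := by lia
  · exact leadWord_mul_pow_mem_normalSpan i hj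
  · rw [hj, hy, ← Algebra.commutes, ← Algebra.smul_def]
    exact Submodule.smul_mem _ b (leadWord_mem_normalSpan i)

theorem mul_y_pow_mem_normalSpan (hy : y ^ 3 = algebraMap C A b) {n : A}
    (hn : n ∈ normalSpan C x y) (j : ℕ) : n * y ^ j ∈ normalSpan C x y := by
  induction j with
  | zero => simpa using hn
  | succ j ih =>
    rw [pow_succ, ← mul_assoc]
    exact mul_y_mem_normalSpan hy ih

theorem mul_left_mem_normalSpan (hy : y ^ 3 = algebraMap C A b) {z : A}
    (hz : ∀ i, z * leadWord x y i ∈ normalSpan C x y) {n : A} (hn : n ∈ normalSpan C x y) :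
    z * n ∈ normalSpan C x y := by
  suffices H : normalSpan C x y ≤ (normalSpan C x y).comap (LinearMap.mulLeft C z) from H hn
  refine Submodule.span_le.2 ?_
  rintro _ ⟨⟨j, i⟩, rfl⟩
  change z * (leadWord x y i * y ^ (j : ℕ)) ∈ normalSpan C x y
  rw [← mul_assoc]
  exact mul_y_pow_mem_normalSpan hy (hz i) j

namespace IsCliffordPair

theorem x_mul_leadWord_mem_normalSpan (h : IsCliffordPair a b α β γ x y) (i : Fin 6) :
    x * leadWord x y i ∈ normalSpan C x y := by
  have hx3 : x * x ^ 2 = a • 1 := by rw [← pow_succ', h.x_pow_three, Algebra.smul_def, mul_one]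
  have lead := leadWord_mem_normalSpan (C := C) (x := x) (y := y)
  fin_cases i
  · simpa [leadWord] using lead 1
  · simpa [leadWord, pow_two] using lead 2
  · have : x * leadWord x y 2 = a • leadWord x y 0 := hx3
    exact this ▸ Submodule.smul_mem _ a (lead 0)
  · exact lead 4
  · simpa [leadWord, pow_two, mul_assoc] using lead 5
  · have : x * leadWord x y 5 = a • leadWord x y 3 := by
      simp [leadWord, ← mul_assoc, hx3]
    exact this ▸ Submodule.smul_mem _ a (lead 3)

theorem y_mul_leadWord_mem_normalSpan (h : IsCliffordPair a b α β γ x y) (i : Fin 6) :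
    y * leadWord x y i ∈ normalSpan C x y := by
  have lead := leadWord_mem_normalSpan (C := C) (x := x) (y := y)
  have lead_mul (i) := mul_y_mem_normalSpan h.y_pow_three (lead i)
  have lead_mul_sq (i) := mul_y_pow_mem_normalSpan h.y_pow_three (lead i) 2
  have smul_lead (c : C) (i) := Submodule.smul_mem _ c (lead i)
  fin_cases i
  · simpa [leadWord] using lead_mul 0
  · exact lead 3
  · exact h.yxx_eq ▸ sub_mem (sub_mem (smul_lead α 0) (lead_mul 2)) (lead 4)
  · exact h.yyx_eq ▸ sub_mem (sub_mem (smul_lead β 0) (lead_mul_sq 1)) (lead_mul 3)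
  · exact h.yxyx_eq ▸ add_mem (smul_lead γ 0) (lead_mul_sq 2)
  · exact h.yxxyx_eq ▸
      sub_mem (add_mem (sub_mem (smul_lead α 3) (smul_lead β 2)) (lead_mul 5)) (smul_lead γ 1)

theorem normalSpan_eq_top (h : IsCliffordPair a b α β γ x y)
    (hgen : Algebra.adjoin C {x, y} = ⊤) : normalSpan C x y = ⊤ := by
  refine submodule_eq_top_of_mul_mem hgen (leadWord_mem_normalSpan 0) ?_
  rintro z (rfl | rfl) n hn
  · exact mul_left_mem_normalSpan h.y_pow_three h.x_mul_leadWord_mem_normalSpan hn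
  · exact mul_left_mem_normalSpan h.y_pow_three h.y_mul_leadWord_mem_normalSpan hn

end IsCliffordPair

end Span

section Independence

variable {C A : Type*} [CommRing C] [Ring A] [Algebra C A]

theorem linearIndependent_normalWord_model {x y : A} {R M : Type*} [CommRing R] [Algebra C R]
    [AddCommGroup M] [Module C M] [Module R M] [IsScalarTower C R M]
    {e : Module.Basis (Fin 6) R M} {r t s u v : R}
    (ht : LinearIndependent C fun j : Fin 3 ↦ t ^ (j : ℕ)) (f : A →ₐ[C] Module.End R M)
    (hx : f x = modelX e r) (hy : f y = modelY e t s u v) :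
    LinearIndependent C (normalWord x y) := by
  let ev : A →ₗ[C] M := LinearMap.applyₗ' C (e 0) ∘ₗ f.toLinearMap
  have hev (p : Fin 3 × Fin 6) : ev (normalWord x y p) = t ^ (p.1 : ℕ) • e p.2 := by
    change f (normalWord x y p) (e 0) = _
    rw [map_normalWord, hx, hy, normalWord_model_apply]
  refine LinearIndependent.of_comp ev ?_
  simpa only [Function.comp_def, hev] using linearIndependent_smul ht e.linearIndependent

end Independence

section GCA

variable (k : Type*) [Field k]

theorem gx_pow_three_mul_gy : gx k ^ 3 * gy k = gy k * gx k ^ 3 := by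
  simpa [gx, gy] using RingQuot.mkAlgHom_rel k (GCRel.rel1 (k := k))

theorem gx_mul_gy_pow_three : gx k * gy k ^ 3 = gy k ^ 3 * gx k := by
  simpa [gx, gy] using RingQuot.mkAlgHom_rel k (GCRel.rel2 (k := k))

theorem gx_sq_mul_gy_sq_add :
    gx k ^ 2 * gy k ^ 2 + (gx k * gy k) ^ 2 = gy k ^ 2 * gx k ^ 2 + (gy k * gx k) ^ 2 := by
  simpa [gx, gy] using RingQuot.mkAlgHom_rel k (GCRel.rel3 (k := k))

theorem adjoin_gx_gy : Algebra.adjoin k {gx k, gy k} = ⊤ := by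
  have hrange : RingQuot.mkAlgHom k (GCRel k) '' Set.range (FreeAlgebra.ι k) = {gx k, gy k} := by
    ext z
    simp [Fin.exists_fin_two, eq_comm, gx, gy]
  rw [← hrange, ← AlgHom.map_adjoin, FreeAlgebra.adjoin_range_ι, Algebra.map_top,
    (AlgHom.range_eq_top _).2 (RingQuot.mkAlgHom_surjective k (GCRel k))]

/-- The homomorphism from `GCA k` to a `k`-algebra sending the generators to a given Clifford pair.
It is only `k`-linear; `gcaLift_algebraMap` makes it linear over the scalars of the pair. -/
noncomputable def gcaLift {C A : Type*} [CommRing C] [Ring A] [Algebra k A] [Algebra C A]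
    {a b α β γ : C} {x y : A} (h : IsCliffordPair a b α β γ x y) : GCA k →ₐ[k] A :=
  RingQuot.liftAlgHom k ⟨FreeAlgebra.lift k ![x, y], by
    rintro _ _ (_ | _ | _)
    · simpa using h.x_pow_three_mul_y
    · simpa using h.x_mul_y_pow_three
    · simpa using h.x_sq_mul_y_sq_add⟩

section Lift

variable {C A : Type*} [CommRing C] [Ring A] [Algebra k A] [Algebra C A]
    {a b α β γ : C} {x y : A}

@[simp]
theorem gcaLift_gx (h : IsCliffordPair a b α β γ x y) : gcaLift k h (gx k) = x := by
  rw [gcaLift, gx, RingQuot.liftAlgHom_mkAlgHom_apply]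
  simp

@[simp]
theorem gcaLift_gy (h : IsCliffordPair a b α β γ x y) : gcaLift k h (gy k) = y := by
  rw [gcaLift, gy, RingQuot.liftAlgHom_mkAlgHom_apply]
  simp

variable {k} [Algebra k C] [IsScalarTower k C A] [Algebra C (GCA k)] [IsScalarTower k C (GCA k)]

theorem gcaLift_algebraMap (hC : Algebra.adjoin k {a, b, α, β, γ} = ⊤)
    (hg : IsCliffordPair a b α β γ (gx k) (gy k)) (h : IsCliffordPair a b α β γ x y) (s : C) :
    gcaLift k h (algebraMap C (GCA k) s) = algebraMap C A s := by
  suffices H : (gcaLift k h).comp (IsScalarTower.toAlgHom k C (GCA k)) =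
      IsScalarTower.toAlgHom k C A from congr($H s)
  refine AlgHom.ext_of_adjoin_eq_top hC ?_
  rintro _ (rfl | rfl | rfl | rfl | rfl)
  · simp [← hg.x_pow_three, ← h.x_pow_three]
  · simp [← hg.y_pow_three, ← h.y_pow_three]
  · simp [← hg.alpha, ← h.alpha]
  · simp [← hg.beta, ← h.beta]
  · simp [← hg.gamma, ← h.gamma]

end Lift

variable {k} {C : Type*} [CommRing C] [Algebra C (GCA k)] {a b α β γ : C}

theorem gcaBasis_mem_span (i : Fin 18) : gcaBasis k i ∈ Submodule.span C (Set.range (gcaBasis k)) :=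
  Submodule.subset_span ⟨i, rfl⟩

theorem leadWord_mem_span_gcaBasis (hg : IsCliffordPair a b α β γ (gx k) (gy k)) (i : Fin 6) :
    leadWord (gx k) (gy k) i ∈ Submodule.span C (Set.range (gcaBasis k)) := by
  have mem := gcaBasis_mem_span (k := k) (C := C)
  have smul_mem (r : C) (i) := Submodule.smul_mem _ r (mem i)
  fin_cases i
  · exact mem 0
  · exact mem 1
  · exact mem 3
  · exact mem 5
  · change gx k * (gy k * gx k) ∈ _
    rw [hg.xyx_eq]
    exact sub_mem (sub_mem (smul_mem α 0) (mem 7)) (mem 10)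
  · change gx k ^ 2 * (gy k * gx k) ∈ _
    rw [hg.xxyx_eq]
    exact sub_mem (sub_mem (smul_mem α 1) (smul_mem a 2)) (mem 13)

theorem leadWord_mul_gy_mem_span_gcaBasis (hg : IsCliffordPair a b α β γ (gx k) (gy k))
    (i : Fin 6) :
    leadWord (gx k) (gy k) i * gy k ∈ Submodule.span C (Set.range (gcaBasis k)) := by
  have mem := gcaBasis_mem_span (k := k) (C := C)
  have smul_mem (r : C) (i) := Submodule.smul_mem _ r (mem i)
  fin_cases i
  · exact (one_mul (gy k)).symm ▸ mem 2
  · exact mem 4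
  · exact mem 7
  · exact hg.yxy_eq ▸ sub_mem (sub_mem (smul_mem β 0) (mem 8)) (mem 9)
  · change gx k * (gy k * gx k) * gy k ∈ _
    rw [← mul_assoc]
    exact mem 12
  · exact hg.xxyxy_eq ▸ sub_mem (sub_mem (smul_mem β 3) (smul_mem a 6)) (mem 15)

theorem leadWord_mul_gy_sq_mem_span_gcaBasis (hg : IsCliffordPair a b α β γ (gx k) (gy k))
    (i : Fin 6) :
    leadWord (gx k) (gy k) i * gy k ^ 2 ∈ Submodule.span C (Set.range (gcaBasis k)) := by
  have mem := gcaBasis_mem_span (k := k) (C := C)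
  have smul_mem (r : C) (i) := Submodule.smul_mem _ r (mem i)
  fin_cases i
  · exact (one_mul (gy k ^ 2)).symm ▸ mem 6
  · exact mem 8
  · exact mem 11
  · exact hg.yxyy_eq ▸ sub_mem (sub_mem (smul_mem β 2) (smul_mem b 1)) (mem 14)
  · change gx k * (gy k * gx k) * gy k ^ 2 ∈ _
    rw [← mul_assoc]
    exact mem 16
  · exact hg.xxyxyy_eq ▸ sub_mem (sub_mem (smul_mem β 7) (smul_mem (a * b) 0)) (mem 17)

theorem normalWord_mem_span_gcaBasis (hg : IsCliffordPair a b α β γ (gx k) (gy k))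
    (p : Fin 3 × Fin 6) :
    normalWord (gx k) (gy k) p ∈ Submodule.span C (Set.range (gcaBasis k)) := by
  obtain ⟨j, i⟩ := p
  fin_cases j
  · simpa [normalWord] using leadWord_mem_span_gcaBasis hg i
  · simpa [normalWord] using leadWord_mul_gy_mem_span_gcaBasis hg i
  · exact leadWord_mul_gy_sq_mem_span_gcaBasis hg i

variable [Algebra k C] [IsScalarTower k C (GCA k)]

theorem span_gcaBasis (hg : IsCliffordPair a b α β γ (gx k) (gy k)) :
    Submodule.span C (Set.range (gcaBasis k)) = ⊤ := by
  have hgen : Algebra.adjoin C {gx k, gy k} = ⊤ := by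
    rw [← Algebra.adjoin_adjoin_of_tower k, adjoin_gx_gy, Algebra.coe_top, Algebra.adjoin_univ]
  rw [eq_top_iff, ← hg.normalSpan_eq_top hgen, normalSpan, Submodule.span_le]
  rintro _ ⟨p, rfl⟩
  exact normalWord_mem_span_gcaBasis hg p

theorem linearIndependent_normalWord (hC : Algebra.adjoin k {a, b, α, β, γ} = ⊤)
    (hg : IsCliffordPair a b α β γ (gx k) (gy k)) :
    LinearIndependent C (normalWord (gx k) (gy k)) := by
  let R := AdjoinRoot (Polynomial.X ^ 3 - Polynomial.C b)
  let t : R := AdjoinRoot.root _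
  let e := Pi.basisFun R (Fin 6)
  have ht : t ^ 3 = algebraMap C R b := root_pow_eq_algebraMap b 3
  have h : IsCliffordPair a b α β γ (modelX e (algebraMap C R a))
      (modelY e t (algebraMap C R α) (algebraMap C R β) (algebraMap C R γ)) :=
    .of_algebraMap (ht ▸ isCliffordPair_model e ..)
  let f : GCA k →ₐ[C] Module.End R (Fin 6 → R) :=
    { gcaLift k h with commutes' := gcaLift_algebraMap hC hg h }
  exact linearIndependent_normalWord_model (linearIndependent_root_pow b three_ne_zero) f
    (gcaLift_gx k h) (gcaLift_gy k h)

theorem existsUnique_sum_gcaBasis (hC : Algebra.adjoin k {a, b, α, β, γ} = ⊤)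
    (hg : IsCliffordPair a b α β γ (gx k) (gy k)) (z : GCA k) :
    ∃! c : Fin 18 → C, z = ∑ i, c i • gcaBasis k i := by
  have hli : LinearIndependent C (gcaBasis k) :=
    linearIndependent_of_span_eq_top (span_gcaBasis hg) (linearIndependent_normalWord hC hg)
      (finProdFinEquiv (m := 3) (n := 6)).symm
  let B := Module.Basis.mk hli (span_gcaBasis hg).ge
  have := B.equivFun.symm.bijective.existsUnique z
  simpa [B, Module.Basis.equivFun_symm_apply, eq_comm] using this

end GCA

section CentralSubalgebra

variable (k : Type*) [Field k]

/-- The subalgebra `S = k[x³, y³, α, β, γ]` of `GCA k`. -/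
abbrev centralSubalgebra : Subalgebra k (GCA k) :=
  Algebra.adjoin k {gx k ^ 3, gy k ^ 3, gα k, gβ k, gγ k}

theorem commute_of_commute_gx_gy {z : GCA k} (hx : Commute (gx k) z) (hy : Commute (gy k) z)
    (w : GCA k) : Commute z w := by
  refine Algebra.commute_of_mem_adjoin_of_forall_mem_commute (R := k) (s := {gx k, gy k})
    (adjoin_gx_gy k ▸ Algebra.mem_top) ?_
  rintro _ (rfl | rfl)
  exacts [hx.symm, hy.symm]

theorem commute_of_mem_centralSubalgebra {s : GCA k} (hs : s ∈ centralSubalgebra k) (z : GCA k) :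
    Commute s z := by
  refine (Algebra.commute_of_mem_adjoin_of_forall_mem_commute hs ?_).symm
  have h₁ := gx_pow_three_mul_gy k
  have h₂ := gx_mul_gy_pow_three k
  have h₃ := gx_sq_mul_gy_sq_add k
  rintro _ (rfl | rfl | rfl | rfl | rfl) <;> refine (commute_of_commute_gx_gy k ?_ ?_ z).symm
  exacts [.pow_right rfl 3, h₁.symm, h₂, .pow_right rfl 3,
    commute_left_alpha h₁, commute_right_alpha h₃, commute_left_beta h₃, commute_right_beta h₂,
    commute_left_gamma h₁ h₃, commute_right_gamma h₂ h₃]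

instance : IsMulCommutative (centralSubalgebra k) :=
  .of_setLike_mul_comm fun _ hs t _ ↦ commute_of_mem_centralSubalgebra k hs t

open scoped IsMulCommutative

/-- The algebra structure of `GCA k` over its central subalgebra `S`. The scalar action is the one
by left multiplication that every subalgebra carries. -/
instance : Algebra (centralSubalgebra k) (GCA k) where
  algebraMap := (centralSubalgebra k).subtype
  commutes' s z := commute_of_mem_centralSubalgebra k s.2 z
  smul_def' _ _ := rfl

theorem exists_isCliffordPair_gx_gy :
    ∃ a b α β γ : centralSubalgebra k, IsCliffordPair a b α β γ (gx k) (gy k) ∧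
      Algebra.adjoin k {a, b, α, β, γ} = ⊤ := by
  have mem {z : GCA k} (hz : z ∈ ({gx k ^ 3, gy k ^ 3, gα k, gβ k, gγ k} : Set (GCA k))) :
      z ∈ centralSubalgebra k := Algebra.subset_adjoin hz
  refine ⟨⟨gx k ^ 3, mem (by simp)⟩, ⟨gy k ^ 3, mem (by simp)⟩, ⟨gα k, mem (by simp)⟩,
    ⟨gβ k, mem (by simp)⟩, ⟨gγ k, mem (by simp)⟩, ⟨rfl, rfl, rfl, rfl, rfl⟩, ?_⟩
  rw [← Algebra.adjoin_adjoin_coe_preimage]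
  congr 1
  ext z
  simp [Subtype.ext_iff]

end CentralSubalgebra

end CubicClifford

open CubicClifford IsMulCommutative in
theorem stmt4_general (k : Type*) [Field k] :
    ∀ a : GCA k,
      ∃! c : Fin 18 → Algebra.adjoin k ({gx k ^ 3, gy k ^ 3, gα k, gβ k, gγ k} : Set (GCA k)),
        a = ∑ i, (c i : GCA k) * gcaBasis k i := by
  obtain ⟨a, b, α, β, γ, hpair, hgen⟩ := exists_isCliffordPair_gx_gy k
  exact existsUnique_sum_gcaBasis hgen hpair

theorem stmt4 (k : Type*) [Field k] (h2 : (2 : k) ≠ 0) (h3 : (3 : k) ≠ 0)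
    (ω : k) (hω : IsPrimitiveRoot ω 3) :
    ∀ a : GCA k,
      ∃! c : Fin 18 → Algebra.adjoin k ({gx k ^ 3, gy k ^ 3, gα k, gβ k, gγ k} : Set (GCA k)),
        a = ∑ i, (c i : GCA k) * gcaBasis k i :=
  stmt4_general k
end

section
/- In the binary cubic generic Clifford algebra A the identity δ⁶ = 3ω(1−ω)·x³y³·δ³ + (1+2ω²)·αβ·δ³ + γ³ − x³β³ − y³α³ + α²β² holds; equivalently, setting s = δ³ − (3ω(1−ω)x³y³ + (1+2ω²)αβ)/2, one has s² = γ³ + (1/4)(−27x⁶y⁶ + α²β² + 18x³y³αβ − 4x³β³ − 4y³α³). -/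
/-!
Besides `δ = yx - ωxy` consider its conjugate `δ' = yx - ω²xy`. Since `α`, `β`, `γ` commute with `x`
and `y`, moving `δ` past `x` and `y` gives `δδ' = γ - u` with `u = ω²αy + ωβx`, and then
`δ²δ'² = γ² + γv + v²` with `v = ωαy + ω²βx`. As `δv = uδ`, it follows that
`δ³δ'³ = (γ² + γu + u²)(γ - u) = γ³ - u³`, and `u³` is read off from
`(ax + by)³ = a³x³ + a²bα + ab²β + b³y³`. Hence both the product and the difference of `δ³` and
`δ'³` are known, which gives the first identity. The element `s` is the mean of `δ³` and `δ'³`, and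
`s² - γ³` is a quarter of the discriminant of the cubic form `(ax + by)³` in `a` and `b`.
-/

section

variable {R A : Type*} [CommRing R] [Ring A] [Algebra R A]

/-- Two elements of a ring satisfying the relations of the binary cubic generic Clifford algebra;
equivalently, `x³`, `y³` and the elements `α`, `β` below commute with both `x` and `y`. -/
structure IsCubicCliffordPair (x y : A) : Prop where
  commute_cube_left : Commute (x ^ 3) y
  commute_cube_right : Commute x (y ^ 3)
  sq_mul_sq_add : x ^ 2 * y ^ 2 + (x * y) ^ 2 = y ^ 2 * x ^ 2 + (y * x) ^ 2

namespace IsCubicCliffordPair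

/-- The element `α`: the coefficient of `a²b` in `(ax + by)³`. -/
def alpha (x y : A) : A := x ^ 2 * y + x * y * x + y * x ^ 2

/-- The element `β`: the coefficient of `ab²` in `(ax + by)³`. -/
def beta (x y : A) : A := x * y ^ 2 + y * x * y + y ^ 2 * x

/-- The element `γ`, which for a pair as above commutes with `x` and `y` and is symmetric
in them. -/
def gamma (x y : A) : A := (x * y) ^ 2 - y ^ 2 * x ^ 2

/-- The element `δ`: the `ω`-commutator of `y` and `x`. Its conjugate `δ'` is
`delta (ω ^ 2) x y`. -/
def delta (ω : R) (x y : A) : A := y * x - ω • (x * y)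

/-- The element `ζαy + ζ²βx`, which for `ζ = ω²` is the difference of `γ` and `δδ'`. -/
def linForm (ζ : R) (x y : A) : A := ζ • (alpha x y * y) + ζ ^ 2 • (beta x y * x)

variable {x y z a b : A} {ω : R}

theorem alpha_swap (x y : A) : alpha y x = beta x y := by
  simp only [alpha, beta]
  abel

theorem commute_beta_of_commute (hx : Commute z x) (hy : Commute z y) : Commute z (beta x y) :=
  ((hx.mul_right (hy.pow_right 2)).add_right ((hy.mul_right hx).mul_right hy)).add_right
    ((hy.pow_right 2).mul_right hx)

theorem commute_alpha_of_commute (hx : Commute z x) (hy : Commute z y) : Commute z (alpha x y) :=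
  alpha_swap y x ▸ commute_beta_of_commute hy hx

theorem commute_delta_of_commute (ω : R) (hx : Commute z x) (hy : Commute z y) :
    Commute z (delta ω x y) :=
  (hy.mul_right hx).sub_right ((hx.mul_right hy).smul_right ω)

theorem commute_linForm_of_commute (ζ : R) (hx : Commute z x) (hy : Commute z y) :
    Commute z (linForm ζ x y) :=
  (((commute_alpha_of_commute hx hy).mul_right hy).smul_right ζ).add_right
    (((commute_beta_of_commute hx hy).mul_right hx).smul_right (ζ ^ 2))

theorem mul_add_mul_cube (hxa : Commute x a) (hya : Commute y a) (hxb : Commute x b)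
    (hyb : Commute y b) (hba : Commute b a) :
    (a * x + b * y) ^ 3 =
      a ^ 3 * x ^ 3 + a ^ 2 * b * alpha x y + a * b ^ 2 * beta x y + b ^ 3 * y ^ 3 := by
  simp only [alpha, beta, pow_succ, pow_zero, one_mul, mul_add, add_mul, mul_assoc,
    hxa.left_comm, hya.left_comm, hxb.left_comm, hyb.left_comm, hba.left_comm]
  abel

theorem symm (h : IsCubicCliffordPair x y) : IsCubicCliffordPair y x where
  commute_cube_left := h.commute_cube_right.symm
  commute_cube_right := h.commute_cube_left.symm
  sq_mul_sq_add := h.sq_mul_sq_add.symm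

theorem gamma_swap (h : IsCubicCliffordPair x y) : gamma y x = gamma x y := by
  simp only [gamma]
  linear_combination (norm := noncomm_ring) -h.sq_mul_sq_add

theorem commute_alpha_left (h : IsCubicCliffordPair x y) : Commute (alpha x y) x := by
  rw [commute_iff_eq, alpha]
  linear_combination (norm := noncomm_ring) -h.commute_cube_left.eq

theorem commute_alpha_right (h : IsCubicCliffordPair x y) : Commute (alpha x y) y := by
  rw [commute_iff_eq, alpha]
  linear_combination (norm := noncomm_ring) h.sq_mul_sq_add

theorem commute_beta_left (h : IsCubicCliffordPair x y) : Commute (beta x y) x :=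
  alpha_swap x y ▸ h.symm.commute_alpha_right

theorem commute_beta_right (h : IsCubicCliffordPair x y) : Commute (beta x y) y :=
  alpha_swap x y ▸ h.symm.commute_alpha_left

theorem commute_alpha_beta (h : IsCubicCliffordPair x y) : Commute (alpha x y) (beta x y) :=
  commute_beta_of_commute h.commute_alpha_left h.commute_alpha_right

theorem commute_gamma_left (h : IsCubicCliffordPair x y) : Commute (gamma x y) x := by
  rw [commute_iff_eq, gamma]
  linear_combination (norm := noncomm_ring)
    -x * h.sq_mul_sq_add + h.commute_cube_left.eq * y + y * h.commute_cube_left.eq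

theorem commute_gamma_right (h : IsCubicCliffordPair x y) : Commute (gamma x y) y :=
  h.gamma_swap ▸ h.symm.commute_gamma_left

theorem mul_add_mul_swap_cube (h : IsCubicCliffordPair x y) :
    (y * x + x * y) ^ 3 =
      (y * x) ^ 3 + (x * y) ^ 3 + alpha x y * beta x y - 3 • (x ^ 3 * y ^ 3) := by
  have hx : x ^ 3 * y = y * x ^ 3 := h.commute_cube_left
  have hx₂ : x ^ 3 * y ^ 2 = y ^ 2 * x ^ 3 := h.commute_cube_left.pow_right 2
  have hy : x * y ^ 3 = y ^ 3 * x := h.commute_cube_right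
  have hy₂ : x ^ 2 * y ^ 3 = y ^ 3 * x ^ 2 := h.commute_cube_right.pow_left 2
  have hxy := h.sq_mul_sq_add
  simp only [alpha, beta]
  linear_combination (norm := noncomm_ring)
    hx * y ^ 2 + hx₂ * y + x ^ 2 * hy + x * hy₂ - x * hxy * y - hxy * (x * y) - x * y * hxy

theorem delta_cube_sub_delta_conj_cube (h : IsCubicCliffordPair x y) (hω : ω ^ 2 + ω + 1 = 0) :
    delta ω x y ^ 3 - delta (ω ^ 2) x y ^ 3 =
      (ω - ω ^ 2) • (3 • (x ^ 3 * y ^ 3) - alpha x y * beta x y) := by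
  have expand (m n : A) : (n - ω • m) ^ 3 - (n - ω ^ 2 • m) ^ 3 =
      -(ω - ω ^ 2) • ((n + m) ^ 3 - n ^ 3 - m ^ 3) := by
    simp only [pow_succ (_ : A), pow_zero, one_mul, mul_add, add_mul, sub_mul, mul_sub,
      smul_mul_assoc, mul_smul_comm, mul_assoc]
    match_scalars <;> grind
  rw [delta, delta, expand, h.mul_add_mul_swap_cube]
  module

theorem sq_delta_cube_sub_delta_conj_cube (h : IsCubicCliffordPair x y) (hω : ω ^ 2 + ω + 1 = 0) :
    (delta ω x y ^ 3 - delta (ω ^ 2) x y ^ 3) ^ 2 =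
      -27 * (x ^ 6 * y ^ 6) + 18 * (x ^ 3 * y ^ 3) * (alpha x y * beta x y) -
        3 * (alpha x y ^ 2 * beta x y ^ 2) := by
  have hω' : (ω - ω ^ 2) ^ 2 = -3 := by grind
  have hx : Commute (alpha x y * beta x y) x := h.commute_alpha_left.mul_left h.commute_beta_left
  have hy : Commute (alpha x y * beta x y) y := h.commute_alpha_right.mul_left h.commute_beta_right
  have hxy : Commute (alpha x y * beta x y) (x ^ 3 * y ^ 3) :=
    (hx.pow_right 3).mul_right (hy.pow_right 3)
  have hcubes : x ^ 6 * y ^ 6 = (x ^ 3 * y ^ 3) ^ 2 := by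
    rw [(h.commute_cube_left.pow_right 3).mul_pow, ← pow_mul, ← pow_mul]
  rw [h.delta_cube_sub_delta_conj_cube hω, smul_pow, hω', neg_smul, ofNat_smul_eq_nsmul, hcubes,
    ← h.commute_alpha_beta.mul_pow]
  generalize x ^ 3 * y ^ 3 = p at *
  generalize alpha x y * beta x y = q at *
  linear_combination (norm := noncomm_ring) 9 * hxy.eq

theorem delta_mul_left (hω : ω ^ 2 + ω + 1 = 0) (x y : A) :
    delta ω x y * x = ω ^ 2 • (x * delta ω x y) + alpha x y := by
  simp only [delta, alpha, sub_mul, mul_sub, smul_mul_assoc, mul_smul_comm, pow_two, mul_assoc]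
  match_scalars <;> grind

theorem delta_mul_right (hω : ω ^ 2 + ω + 1 = 0) (x y : A) :
    delta ω x y * y = ω • (y * delta ω x y) - ω • beta x y := by
  simp only [delta, beta, sub_mul, mul_sub, smul_mul_assoc, mul_smul_comm, pow_two, mul_assoc]
  match_scalars <;> grind

theorem delta_mul_linForm (h : IsCubicCliffordPair x y) (hω : ω ^ 2 + ω + 1 = 0) (ζ : R) :
    delta ω x y * linForm ζ x y =
      linForm (ω * ζ) x y * delta ω x y + (ζ ^ 2 - ω * ζ) • (alpha x y * beta x y) := by
  have hα : Commute (delta ω x y) (alpha x y) :=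
    (commute_delta_of_commute ω h.commute_alpha_left h.commute_alpha_right).symm
  have hβ : Commute (delta ω x y) (beta x y) :=
    (commute_delta_of_commute ω h.commute_beta_left h.commute_beta_right).symm
  simp only [linForm, mul_add, add_mul, mul_smul_comm, smul_mul_assoc, hα.left_comm, hβ.left_comm,
    delta_mul_left hω, delta_mul_right hω, mul_sub, mul_assoc, h.commute_alpha_beta.eq]
  match_scalars <;> grind

theorem delta_mul_delta_conj (h : IsCubicCliffordPair x y) (hω : ω ^ 2 + ω + 1 = 0) :
    delta ω x y * delta (ω ^ 2) x y = gamma x y - linForm (ω ^ 2) x y := by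
  have hxy : x * (x * (y * y)) = y * (y * (x * x)) + y * (x * (y * x)) - x * (y * (x * y)) := by
    linear_combination (norm := noncomm_ring) h.sq_mul_sq_add
  simp only [delta, gamma, linForm, alpha, beta, pow_two x, pow_two y, pow_two (x * y), sub_mul,
    mul_sub, add_mul, smul_mul_assoc, mul_smul_comm, mul_assoc, hxy]
  match_scalars <;> grind

theorem linForm_mul_linForm (h : IsCubicCliffordPair x y) (ζ η : R) :
    linForm ζ x y * linForm η x y =
      (ζ * η) • (alpha x y ^ 2 * y ^ 2) + (ζ * η) ^ 2 • (beta x y ^ 2 * x ^ 2) +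
        (ζ * η) • (alpha x y * beta x y * (η • (y * x) + ζ • (x * y))) := by
  simp only [linForm, add_mul, mul_add, smul_mul_assoc, mul_smul_comm, mul_assoc,
    pow_two (alpha x y), pow_two (beta x y), pow_two x, pow_two y,
    h.commute_alpha_left.symm.left_comm, h.commute_alpha_right.symm.left_comm,
    h.commute_beta_left.symm.left_comm, h.commute_beta_right.symm.left_comm,
    h.commute_alpha_beta.symm.left_comm]
  match_scalars <;> grind

theorem linForm_one_mul_linForm_conj (h : IsCubicCliffordPair x y) (hω : ω ^ 2 + ω + 1 = 0) :
    linForm (1 : R) x y * linForm (ω ^ 2) x y =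
      linForm ω x y ^ 2 + (ω - 1) • (alpha x y * beta x y * delta (ω ^ 2) x y) := by
  simp only [pow_two (linForm _ _ _), h.linForm_mul_linForm, delta, mul_sub, mul_add, mul_smul_comm]
  match_scalars <;> grind

theorem linForm_cube (h : IsCubicCliffordPair x y) (hω : ω ^ 2 + ω + 1 = 0) :
    linForm ω x y ^ 3 =
      x ^ 3 * beta x y ^ 3 + y ^ 3 * alpha x y ^ 3 - alpha x y ^ 2 * beta x y ^ 2 := by
  have expand := mul_add_mul_cube (h.commute_beta_left.symm.smul_right (ω ^ 2))
    (h.commute_beta_right.symm.smul_right (ω ^ 2)) (h.commute_alpha_left.symm.smul_right ω)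
    (h.commute_alpha_right.symm.smul_right ω)
    ((h.commute_alpha_beta.smul_right (ω ^ 2)).smul_left ω)
  rw [linForm, add_comm, ← smul_mul_assoc, ← smul_mul_assoc, expand]
  simp only [smul_pow, smul_mul_assoc, mul_smul_comm,
    (h.commute_beta_left.pow_pow 3 3).eq, (h.commute_alpha_right.pow_pow 3 3).eq]
  have hβα : beta x y ^ 2 * alpha x y * alpha x y = alpha x y ^ 2 * beta x y ^ 2 := by
    rw [mul_assoc, ← pow_two, (h.commute_alpha_beta.pow_pow 2 2).eq]
  have hβα' : beta x y * alpha x y ^ 2 * beta x y = alpha x y ^ 2 * beta x y ^ 2 := by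
    rw [(h.commute_alpha_beta.pow_left 2).symm.eq, mul_assoc, ← pow_two]
  rw [hβα, hβα']
  match_scalars <;> grind

theorem delta_sq_mul_delta_conj_sq (h : IsCubicCliffordPair x y) (hω : ω ^ 2 + ω + 1 = 0) :
    delta ω x y ^ 2 * delta (ω ^ 2) x y ^ 2 =
      gamma x y ^ 2 + gamma x y * linForm ω x y + linForm ω x y ^ 2 := by
  set δ := delta ω x y
  set δ' := delta (ω ^ 2) x y
  set γ := gamma x y
  set q := alpha x y * beta x y
  have hδδ' : δ * δ' = γ - linForm (ω ^ 2) x y := h.delta_mul_delta_conj hω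
  have hγδ : δ * γ = γ * δ :=
    (commute_delta_of_commute ω h.commute_gamma_left h.commute_gamma_right).symm
  have hγl : Commute γ (linForm (1 : R) x y) :=
    commute_linForm_of_commute _ h.commute_gamma_left h.commute_gamma_right
  have hδl : δ * linForm (ω ^ 2) x y = linForm (1 : R) x y * δ + (ω - 1) • q := by
    have hω₃ : ω * ω ^ 2 = 1 := by grind
    have hω₄ : (ω ^ 2) ^ 2 - 1 = ω - 1 := by grind
    rw [h.delta_mul_linForm hω, hω₃, hω₄]
  have hsum : linForm (1 : R) x y + linForm (ω ^ 2) x y = -linForm ω x y := by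
    simp only [linForm]
    match_scalars <;> grind
  calc δ ^ 2 * δ' ^ 2 = δ * (δ * δ') * δ' := by noncomm_ring
    _ = (γ - linForm (1 : R) x y) * (δ * δ') - (ω - 1) • (q * δ') := by
      rw [hδδ', mul_sub, hγδ, hδl, ← hδδ']
      simp only [sub_mul, add_mul, mul_assoc, smul_mul_assoc]
      abel
    _ = γ ^ 2 - γ * (linForm (1 : R) x y + linForm (ω ^ 2) x y) +
        (linForm (1 : R) x y * linForm (ω ^ 2) x y - (ω - 1) • (q * δ')) := by
      rw [hδδ', sub_mul, mul_sub, mul_sub, ← hγl.eq, mul_add, pow_two γ]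
      abel
    _ = γ ^ 2 + γ * linForm ω x y + linForm ω x y ^ 2 := by
      rw [hsum, h.linForm_one_mul_linForm_conj hω, add_sub_cancel_right, mul_neg, sub_neg_eq_add]

theorem delta_cube_mul_delta_conj_cube (h : IsCubicCliffordPair x y) (hω : ω ^ 2 + ω + 1 = 0) :
    delta ω x y ^ 3 * delta (ω ^ 2) x y ^ 3 =
      gamma x y ^ 3 - x ^ 3 * beta x y ^ 3 - y ^ 3 * alpha x y ^ 3 +
        alpha x y ^ 2 * beta x y ^ 2 := by
  set δ := delta ω x y
  set δ' := delta (ω ^ 2) x y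
  set γ := gamma x y
  set u := linForm (ω ^ 2) x y
  set v := linForm ω x y
  have hδδ' : δ * δ' = γ - u := h.delta_mul_delta_conj hω
  have hγδ : Commute δ γ := Commute.symm <|
    commute_delta_of_commute ω h.commute_gamma_left h.commute_gamma_right
  have hγu : Commute γ u :=
    commute_linForm_of_commute _ h.commute_gamma_left h.commute_gamma_right
  have hδv : SemiconjBy δ v u := by
    have key := h.delta_mul_linForm hω ω
    rwa [← pow_two, sub_self, zero_smul, add_zero] at key
  have hδ : SemiconjBy δ (γ ^ 2 + γ * v + v ^ 2) (γ ^ 2 + γ * u + u ^ 2) :=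
    SemiconjBy.add_right (SemiconjBy.add_right (hγδ.pow_right 2) (SemiconjBy.mul_right hγδ hδv))
      (hδv.pow_right 2)
  calc δ ^ 3 * δ' ^ 3 = δ * (δ ^ 2 * δ' ^ 2) * δ' := by noncomm_ring
    _ = (γ ^ 2 + γ * u + u ^ 2) * (γ - u) := by
      rw [h.delta_sq_mul_delta_conj_sq hω, hδ.eq, mul_assoc, hδδ']
    _ = γ ^ 3 - u ^ 3 := by
      linear_combination (norm := noncomm_ring) -γ * hγu.eq - hγu.eq * u - u * hγu.eq
    _ = _ := by
      rw [h.linForm_cube (by grind)]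
      abel

theorem delta_conj_conj (hω : ω ^ 2 + ω + 1 = 0) (x y : A) :
    delta ((ω ^ 2) ^ 2) x y = delta ω x y := by
  rw [show (ω ^ 2) ^ 2 = ω by grind]

theorem delta_conj_cube_mul_delta_cube (h : IsCubicCliffordPair x y) (hω : ω ^ 2 + ω + 1 = 0) :
    delta (ω ^ 2) x y ^ 3 * delta ω x y ^ 3 =
      gamma x y ^ 3 - x ^ 3 * beta x y ^ 3 - y ^ 3 * alpha x y ^ 3 +
        alpha x y ^ 2 * beta x y ^ 2 := by
  have hω₂ : (ω ^ 2) ^ 2 + ω ^ 2 + 1 = 0 := by grind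
  rw [← h.delta_cube_mul_delta_conj_cube hω₂, delta_conj_conj hω]

theorem delta_pow_six (h : IsCubicCliffordPair x y) (hω : ω ^ 2 + ω + 1 = 0) :
    delta ω x y ^ 6 =
      (3 * ω * (1 - ω)) • (x ^ 3 * y ^ 3) * delta ω x y ^ 3 +
        (1 + 2 * ω ^ 2) • (alpha x y * beta x y) * delta ω x y ^ 3 +
        gamma x y ^ 3 - x ^ 3 * beta x y ^ 3 - y ^ 3 * alpha x y ^ 3 +
        alpha x y ^ 2 * beta x y ^ 2 := by
  calc delta ω x y ^ 6
      = (delta ω x y ^ 3 - delta (ω ^ 2) x y ^ 3) * delta ω x y ^ 3 +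
          delta (ω ^ 2) x y ^ 3 * delta ω x y ^ 3 := by rw [sub_mul]; noncomm_ring
    _ = _ := by
      have hscalars (p q : A) : (ω - ω ^ 2) • (3 • p - q) =
          (3 * ω * (1 - ω)) • p + (1 + 2 * ω ^ 2) • q := by
        match_scalars <;> grind
      rw [h.delta_cube_sub_delta_conj_cube hω, h.delta_conj_cube_mul_delta_cube hω, hscalars,
        add_mul]
      abel

theorem sq_delta_cube_add_delta_conj_cube (h : IsCubicCliffordPair x y) (hω : ω ^ 2 + ω + 1 = 0) :
    (delta ω x y ^ 3 + delta (ω ^ 2) x y ^ 3) ^ 2 =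
      4 * gamma x y ^ 3 +
        (-27 * (x ^ 6 * y ^ 6) + alpha x y ^ 2 * beta x y ^ 2 +
          18 * (x ^ 3 * y ^ 3) * (alpha x y * beta x y) -
          4 * x ^ 3 * beta x y ^ 3 - 4 * y ^ 3 * alpha x y ^ 3) := by
  have polarize (d d' : A) : (d + d') ^ 2 = 2 * (d * d') + 2 * (d' * d) + (d - d') ^ 2 := by
    noncomm_ring
  rw [polarize, h.delta_cube_mul_delta_conj_cube hω, h.delta_conj_cube_mul_delta_cube hω,
    h.sq_delta_cube_sub_delta_conj_cube hω]
  noncomm_ring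

theorem sq_delta_cube_sub_smul_sub_smul [Invertible (2 : R)] (h : IsCubicCliffordPair x y)
    (hω : ω ^ 2 + ω + 1 = 0) :
    (delta ω x y ^ 3 - (3 * ω * (1 - ω) * ⅟2) • (x ^ 3 * y ^ 3) -
        ((1 + 2 * ω ^ 2) * ⅟2) • (alpha x y * beta x y)) ^ 2 =
      gamma x y ^ 3 + (⅟2 ^ 2 : R) •
        (-27 * (x ^ 6 * y ^ 6) + alpha x y ^ 2 * beta x y ^ 2 +
          18 * (x ^ 3 * y ^ 3) * (alpha x y * beta x y) -
          4 * x ^ 3 * beta x y ^ 3 - 4 * y ^ 3 * alpha x y ^ 3) := by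
  have h2 : (2 : R) * ⅟2 = 1 := mul_invOf_self 2
  have hmean : delta ω x y ^ 3 - (3 * ω * (1 - ω) * ⅟2) • (x ^ 3 * y ^ 3) -
      ((1 + 2 * ω ^ 2) * ⅟2) • (alpha x y * beta x y) =
        (⅟2 : R) • (delta ω x y ^ 3 + delta (ω ^ 2) x y ^ 3) := by
    have hconj := sub_eq_iff_eq_add.mp (h.delta_cube_sub_delta_conj_cube hω)
    rw [hconj]
    match_scalars <;> grind
  have h4 : (⅟2 ^ 2 : R) • (4 * gamma x y ^ 3) = gamma x y ^ 3 := by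
    rw [show (4 : A) = algebraMap R A 4 from (map_ofNat _ 4).symm, ← Algebra.smul_def, smul_smul,
      show (⅟2 ^ 2 : R) * 4 = 1 by grind, one_smul]
  rw [hmean, smul_pow, h.sq_delta_cube_add_delta_conj_cube hω, smul_add, h4]

end IsCubicCliffordPair

open IsCubicCliffordPair in
theorem stmt7_general [Invertible (2 : R)] {ω : R} (hω : ω ^ 2 + ω + 1 = 0) {x y : A}
    (h : IsCubicCliffordPair x y) :
    delta ω x y ^ 6 =
        (3 * ω * (1 - ω)) • (x ^ 3 * y ^ 3) * delta ω x y ^ 3 +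
          (1 + 2 * ω ^ 2) • (alpha x y * beta x y) * delta ω x y ^ 3 +
          gamma x y ^ 3 - x ^ 3 * beta x y ^ 3 - y ^ 3 * alpha x y ^ 3 +
          alpha x y ^ 2 * beta x y ^ 2 ∧
      (delta ω x y ^ 3 - (3 * ω * (1 - ω) * ⅟2) • (x ^ 3 * y ^ 3) -
          ((1 + 2 * ω ^ 2) * ⅟2) • (alpha x y * beta x y)) ^ 2 =
        gamma x y ^ 3 + (⅟2 ^ 2 : R) •
          (-27 * (x ^ 6 * y ^ 6) + alpha x y ^ 2 * beta x y ^ 2 +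
            18 * (x ^ 3 * y ^ 3) * (alpha x y * beta x y) -
            4 * x ^ 3 * beta x y ^ 3 - 4 * y ^ 3 * alpha x y ^ 3) :=
  ⟨h.delta_pow_six hω, h.sq_delta_cube_sub_smul_sub_smul hω⟩

end

theorem isCubicCliffordPair_gx_gy (k : Type*) [Field k] :
    IsCubicCliffordPair (gx k) (gy k) where
  commute_cube_left := by
    simpa [commute_iff_eq, gx, gy] using RingQuot.mkAlgHom_rel k (GCRel.rel1 (k := k))
  commute_cube_right := by
    simpa [commute_iff_eq, gx, gy] using RingQuot.mkAlgHom_rel k (GCRel.rel2 (k := k))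
  sq_mul_sq_add := by simpa [gx, gy] using RingQuot.mkAlgHom_rel k (GCRel.rel3 (k := k))

theorem delta_gx_gy (k : Type*) [Field k] (ω : k) :
    IsCubicCliffordPair.delta ω (gx k) (gy k) = gδ k ω := by
  rw [IsCubicCliffordPair.delta, gδ, Algebra.smul_def]

theorem sq_add_self_add_one_eq_zero_of_isPrimitiveRoot {K : Type*} [CommRing K] [IsDomain K] {ω : K}
    (hω : IsPrimitiveRoot ω 3) : ω ^ 2 + ω + 1 = 0 := by
  have hsum := hω.geom_sum_eq_zero (by norm_num)
  rw [Finset.sum_range_succ, Finset.sum_range_succ, Finset.sum_range_one] at hsum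
  linear_combination hsum

theorem stmt7 (k : Type*) [Field k] (h2 : (2 : k) ≠ 0) (h3 : (3 : k) ≠ 0)
    (ω : k) (hω : IsPrimitiveRoot ω 3) :
    gδ k ω ^ 6 =
        algebraMap k (GCA k) (3 * ω * (1 - ω)) * (gx k ^ 3 * gy k ^ 3) * gδ k ω ^ 3 +
          algebraMap k (GCA k) (1 + 2 * ω ^ 2) * (gα k * gβ k) * gδ k ω ^ 3 +
          gγ k ^ 3 - gx k ^ 3 * gβ k ^ 3 - gy k ^ 3 * gα k ^ 3 + gα k ^ 2 * gβ k ^ 2 ∧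
      (gδ k ω ^ 3 -
          algebraMap k (GCA k) ((3 * ω * (1 - ω)) / 2) * (gx k ^ 3 * gy k ^ 3) -
          algebraMap k (GCA k) ((1 + 2 * ω ^ 2) / 2) * (gα k * gβ k)) ^ 2 =
        gγ k ^ 3 +
          algebraMap k (GCA k) (1 / 4) *
            (-27 * (gx k ^ 6 * gy k ^ 6) + gα k ^ 2 * gβ k ^ 2 +
              18 * (gx k ^ 3 * gy k ^ 3) * (gα k * gβ k) -
              4 * gx k ^ 3 * gβ k ^ 3 - 4 * gy k ^ 3 * gα k ^ 3) := by
  have := invertibleOfNonzero h2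
  have h4 : (1 / 4 : k) = 2⁻¹ ^ 2 := by norm_num
  simp only [h4, div_eq_mul_inv, ← invOf_eq_inv, ← Algebra.smul_def, ← delta_gx_gy]
  exact stmt7_general (sq_add_self_add_one_eq_zero_of_isPrimitiveRoot hω)
    (isCubicCliffordPair_gx_gy k)
end
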